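/- arXiv:2106.05811 — 2 statements merged into one kernel-verified Lean document; each statement's English description precedes it below -/
import Mathlib

section
/- Let κ̃ > 0, λ ≥ 0, A ≥ 0, and c ∈ ℝ. Then there exist R > C_B/κ̃ and y ∈ C^∞_loc((0, ∞); ℝ) such that r y''(r) + A y'(r) + κ̃² r sinh y(r) = r λ for all r ∈ (0, ∞), lim_{r→0⁺} y(r) = c, lim_{r→0⁺} y'(r) = 0, and y(R) = arcsinh(λ/κ̃²). -/
open MeasureTheory Set Filter
open scoped ENNReal NNReal Topology BigOperators

noncomputable section

/-- Euclidean space ℝ^d. -/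
abbrev Euc (d : ℕ) := EuclideanSpace ℝ (Fin d)

/-- Smooth compactly supported test functions supported inside Ω. -/
def IsTestFun {d : ℕ} (Ω : Set (Euc d)) (φ : Euc d → ℂ) : Prop :=
  ContDiff ℝ (⊤ : ℕ∞) φ ∧ HasCompactSupport φ ∧ tsupport φ ⊆ Ω

/-- The i-th partial derivative of a (differentiable) function. -/
def pd {d : ℕ} (i : Fin d) (φ : Euc d → ℂ) (x : Euc d) : ℂ :=
  fderiv ℝ φ x (EuclideanSpace.single i (1 : ℝ))

/-- `v` is the i-th weak partial derivative of `u` on Ω. -/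
def IsWeakDeriv {d : ℕ} (Ω : Set (Euc d)) (i : Fin d) (u v : Euc d → ℂ) : Prop :=
  ∀ φ : Euc d → ℂ, IsTestFun Ω φ →
    ∫ x in Ω, u x * pd i φ x = - ∫ x in Ω, v x * φ x

/-- Membership in L²(Ω). -/
def MemL2 {d : ℕ} (Ω : Set (Euc d)) (u : Euc d → ℂ) : Prop :=
  MemLp u 2 (volume.restrict Ω)

/-- The L²(Ω) norm. -/
def L2N {d : ℕ} (Ω : Set (Euc d)) (u : Euc d → ℂ) : ℝ :=
  (eLpNorm u 2 (volume.restrict Ω)).toReal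

/-- The L^∞(Ω) norm. -/
def LinfN {d : ℕ} (Ω : Set (Euc d)) (u : Euc d → ℂ) : ℝ :=
  (eLpNorm u ⊤ (volume.restrict Ω)).toReal

/-- A bundled Sobolev function of integer order k on Ω : the function together with
all of its iterated weak partial derivatives up to order k, all belonging to L²(Ω).
`D j v` is the iterated weak derivative ∂_{v 0} ∂_{v 1} ⋯ ∂_{v (j-1)} u. -/
structure SobFun (d : ℕ) (Ω : Set (Euc d)) (k : ℕ) where
  D : (j : ℕ) → (Fin j → Fin d) → Euc d → ℂ
  mem : ∀ j, j ≤ k → ∀ v : Fin j → Fin d, MemL2 Ω (D j v)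
  weak : ∀ j, j < k → ∀ v : Fin j → Fin d, ∀ i : Fin d,
    IsWeakDeriv Ω i (D j v) (D (j+1) (Fin.cons i v))

/-- The underlying function of a bundled Sobolev function. -/
def SobFun.u {d : ℕ} {Ω : Set (Euc d)} {k : ℕ} (U : SobFun d Ω k) : Euc d → ℂ :=
  U.D 0 (fun i => i.elim0)

/-- First-order weak partial derivatives of a bundled Sobolev function. -/
def SobFun.d1 {d : ℕ} {Ω : Set (Euc d)} {k : ℕ} (U : SobFun d Ω k) (i : Fin d) :
    Euc d → ℂ :=
  U.D 1 (fun _ => i)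

/-- Forgetting the top-order derivatives of a bundled Sobolev function. -/
def SobFun.lower {d : ℕ} {Ω : Set (Euc d)} {k : ℕ} (U : SobFun d Ω (k+1)) :
    SobFun d Ω k :=
  ⟨U.D, fun j hj v => U.mem j (Nat.le_succ_of_le hj) v,
    fun j hj v i => U.weak j (Nat.lt_succ_of_lt hj) v i⟩

/-- Squared Gagliardo seminorm, as an extended nonnegative real. -/
def gagliardoE {d : ℕ} (Ω : Set (Euc d)) (s' : ℝ) (v : Euc d → ℂ) : ℝ≥0∞ :=
  ∫⁻ x in Ω, ∫⁻ y in Ω,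
    ((‖v x - v y‖₊ : ℝ≥0∞) ^ (2 : ℕ)) / ((‖x - y‖₊ : ℝ≥0∞) ^ ((d : ℝ) + 2 * s'))

/-- Gagliardo seminorm with differentiability parameter s' ∈ (0,1). -/
def gagliardo {d : ℕ} (Ω : Set (Euc d)) (s' : ℝ) (v : Euc d → ℂ) : ℝ :=
  ((gagliardoE Ω s' v) ^ ((1 : ℝ)/2)).toReal

/-- Integer-order Sobolev norm ‖·‖_{H^k(Ω)}. -/
def SobNormInt {d : ℕ} {Ω : Set (Euc d)} {k : ℕ} (U : SobFun d Ω k) : ℝ :=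
  Real.sqrt (∑ j ∈ Finset.range (k+1), ∑ v : Fin j → Fin d, (L2N Ω (U.D j v))^2)

/-- Sobolev norm ‖·‖_{H^s(Ω)} for k ≤ s < k+1 : the integer part plus, when s > k,
the Gagliardo seminorms of the top-order derivatives. -/
def SobNormS {d : ℕ} {Ω : Set (Euc d)} {k : ℕ} (s : ℝ) (U : SobFun d Ω k) : ℝ :=
  Real.sqrt ((∑ j ∈ Finset.range (k+1), ∑ v : Fin j → Fin d, (L2N Ω (U.D j v))^2)
    + if (k : ℝ) < s then
        ∑ v : Fin k → Fin d, (gagliardo Ω (s - k) (U.D k v))^2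
      else 0)

/-- Finiteness of the fractional part of the H^s norm (membership in H^s). -/
def SobFinS {d : ℕ} {Ω : Set (Euc d)} {k : ℕ} (s : ℝ) (U : SobFun d Ω k) : Prop :=
  (k : ℝ) < s → ∀ v : Fin k → Fin d, gagliardoE Ω (s - k) (U.D k v) < ⊤

/-- H^s distance between two bundled Sobolev functions, k ≤ s < k+1. -/
def SobDistS {d : ℕ} {Ω : Set (Euc d)} {k : ℕ} (s : ℝ) (U V : SobFun d Ω k) : ℝ :=
  Real.sqrt ((∑ j ∈ Finset.range (k+1), ∑ v : Fin j → Fin d,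
      (L2N Ω (fun x => U.D j v x - V.D j v x))^2)
    + if (k : ℝ) < s then
        ∑ v : Fin k → Fin d, (gagliardo Ω (s - k) (fun x => U.D k v x - V.D k v x))^2
      else 0)

/-- Membership in H¹₀(Ω) : the extension by zero belongs to H¹(ℝ^d). -/
def MemH10 {d : ℕ} (Ω : Set (Euc d)) (u : Euc d → ℂ) : Prop :=
  MemL2 univ (Ω.indicator u) ∧
  ∀ i : Fin d, ∃ v : Euc d → ℂ, MemL2 univ v ∧ IsWeakDeriv univ i (Ω.indicator u) v

/-- The principal Dirichlet eigenvalue of -Δ on Ω, via the Rayleigh variational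
characterization (infimum over smooth compactly supported test functions). -/
def lambda1 {d : ℕ} (Ω : Set (Euc d)) : ℝ :=
  sInf { r : ℝ | ∃ φ : Euc d → ℂ, IsTestFun Ω φ ∧ φ ≠ 0 ∧
    r = (∫ x, ‖fderiv ℝ φ x‖^2) / (∫ x, ‖φ x‖^2) }

/-- Ω has a smooth boundary: it is a sublevel set of a smooth function whose
gradient does not vanish on the boundary. -/
def HasSmoothBoundary {d : ℕ} (Ω : Set (Euc d)) : Prop :=
  ∃ f : Euc d → ℝ, ContDiff ℝ (⊤ : ℕ∞) f ∧ Ω = {x | f x < 0} ∧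
    ∀ x ∈ frontier Ω, fderiv ℝ f x ≠ 0

/-- Uniform ellipticity: Re ∑ ε^{ij}(x) ξ_i conj(ξ_j) ≥ θ |ξ|² for a.e. x ∈ Ω. -/
def UniformlyElliptic {d : ℕ} (Ω : Set (Euc d))
    (ε : Euc d → Matrix (Fin d) (Fin d) ℂ) (θ : ℝ) : Prop :=
  ∀ᵐ x ∂(volume.restrict Ω), ∀ ξ : Fin d → ℂ,
    θ * ∑ i, ‖ξ i‖^2 ≤ (∑ i, ∑ j, ε x i j * ξ i * (starRingEnd ℂ) (ξ j)).re

/-- ε ∈ W^{1,∞}(Ω; ℂ^{d×d}) : every entry is bounded and Lipschitz on Ω. -/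
def EpsW1inf {d : ℕ} (Ω : Set (Euc d)) (ε : Euc d → Matrix (Fin d) (Fin d) ℂ) : Prop :=
  ∃ K : ℝ≥0, ∀ i j, LipschitzOnWith K (fun x => ε x i j) Ω ∧ ∀ x ∈ Ω, ‖ε x i j‖ ≤ (K : ℝ)

/-- `Lu` is a representative of  L u = -∇·(ε ∇u) + κ² u  for the H²-function U:
there are weak divergence data g i = ∂_i (∑_j ε^{ij} ∂_j u)  with
Lu = -∑ g i + κ² u  a.e. on Ω. -/
def IsLu {d : ℕ} (Ω : Set (Euc d)) (ε : Euc d → Matrix (Fin d) (Fin d) ℂ)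
    (κ2 : Euc d → ℂ) (U : SobFun d Ω 2) (Lu : Euc d → ℂ) : Prop :=
  ∃ g : Fin d → Euc d → ℂ,
    (∀ i, IsWeakDeriv Ω i (fun x => ∑ j, ε x i j * U.d1 j x) (g i)) ∧
    ∀ᵐ x ∂(volume.restrict Ω), Lu x = -(∑ i, g i x) + κ2 x * U.u x

/-- U ∈ H²(Ω) is a strong solution of the nPBE
  -∇·(ε ∇u) + κ² sinh u = f in Ω,  u = g on ∂Ω,
where the boundary datum is represented by a lift w (u - w ∈ H¹₀(Ω)). -/
def IsStrongSolNPBE {d : ℕ} (Ω : Set (Euc d)) (ε : Euc d → Matrix (Fin d) (Fin d) ℂ)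
    (κ2 : Euc d → ℂ) (f w : Euc d → ℂ) (U : SobFun d Ω 2) : Prop :=
  (∃ g : Fin d → Euc d → ℂ,
    (∀ i, IsWeakDeriv Ω i (fun x => ∑ j, ε x i j * U.d1 j x) (g i)) ∧
    ∀ᵐ x ∂(volume.restrict Ω),
      -(∑ i, g i x) + κ2 x * Complex.sinh (U.u x) = f x) ∧
  MemH10 Ω (fun x => U.u x - w x)

/-- U ∈ H¹(Ω) is a weak solution of the linear PBE L u = f with boundary lift w. -/
def IsWeakSolLinPBE {d : ℕ} (Ω : Set (Euc d)) (ε : Euc d → Matrix (Fin d) (Fin d) ℂ)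
    (κ2 : Euc d → ℂ) (f w : Euc d → ℂ) (U : SobFun d Ω 1) : Prop :=
  MemH10 Ω (fun x => U.u x - w x) ∧
  ∀ Φ : SobFun d Ω 1, MemH10 Ω Φ.u →
    (∫ x in Ω, ((∑ i, ∑ j, ε x i j * U.d1 j x * (starRingEnd ℂ) (Φ.d1 i x))
        + κ2 x * U.u x * (starRingEnd ℂ) (Φ.u x)))
      = ∫ x in Ω, f x * (starRingEnd ℂ) (Φ.u x)

/-- Taylor coefficients n_k of sinh z - z : 1/k! for odd k, 0 for even k. -/
def nk (k : ℕ) : ℝ := if Odd k then 1 / (Nat.factorial k) else 0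

/-!
Positive stiffness `k` of the force `f` about `a` (that is, `k (x - a)² ≤ f x (x - a)`) gives both
halves of the theorem for `y'' + (A / r) y' + f(y) = 0`. It is applied to `f x = κ̃² sinh x - λ` and
`a = arsinh (λ / κ̃²)`.

*Existence.* The singular problem is the Volterra equation
`y(r) = c - ∫₀^r s^(-A) ∫₀^s t^A f(y(t)) dt ds`, which for globally Lipschitz `f` is a contraction
in the norm weighted by `exp (-L r²)`. The energy `y'² / 2 + F(y)`, with `F' = f`, is nonincreasing
and `F` grows quadratically, so solutions stay in an interval that is known in advance. A locally
Lipschitz `f` may therefore be replaced outside that interval by affine functions of slope `k`.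

*Oscillation.* As long as `y ≠ a`, the quotient `q = y' / (y - a)` satisfies the Riccati inequality
`q' ≤ -k - (A / r) q - q²`, hence `q' ≤ -δ (1 + q²)` for large `r`. Then `arctan q` decreases
without bound, which is absurd, so `y` attains `a` at arbitrarily large `r`.
-/

section WeightedContraction

variable {X E : Type*} [TopologicalSpace X] [NormedAddCommGroup E] [NormedSpace ℝ E]
  [CompleteSpace E]

-- Bielecki's method: `u ↦ y₀ + W • u` identifies the bounded continuous functions with the
-- functions at finite `W`-weighted distance from `y₀`.
theorem exists_continuous_fixedPoint_of_weighted_contraction {W : X → ℝ} (hW : Continuous W)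
    (hW_pos : ∀ x, 0 < W x) {S : (X → E) → X → E} (hS : ∀ y, Continuous y → Continuous (S y))
    {y₀ : X → E} (hy₀ : Continuous y₀) {C : ℝ} (hC : ∀ x, ‖S y₀ x - y₀ x‖ ≤ C * W x)
    {q : ℝ≥0} (hq : q < 1)
    (hSq : ∀ y z, Continuous y → Continuous z → ∀ D, (∀ x, ‖y x - z x‖ ≤ D * W x) →
      ∀ x, ‖S y x - S z x‖ ≤ q * D * W x) :
    ∃ y, Continuous y ∧ S y = y := by
  let lift (u : BoundedContinuousFunction X E) (x : X) : E := y₀ x + W x • u x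
  have continuous_lift (u) : Continuous (lift u) := hy₀.add (hW.smul u.continuous)
  have norm_lift_sub_lift (u v) (x) : ‖lift u x - lift v x‖ ≤ dist u v * W x := by
    rw [add_sub_add_left_eq_sub, ← smul_sub, norm_smul, Real.norm_of_nonneg (hW_pos x).le,
      mul_comm, ← dist_eq_norm]
    exact mul_le_mul_of_nonneg_right (u.dist_coe_le_dist x) (hW_pos x).le
  have norm_lift_sub (u) (x) : ‖lift u x - y₀ x‖ ≤ ‖u‖ * W x := by
    simpa [lift] using norm_lift_sub_lift u 0 x
  have norm_inv_smul_le {v : E} {x : X} {B : ℝ} (h : ‖v‖ ≤ B * W x) : ‖(W x)⁻¹ • v‖ ≤ B := by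
    rwa [norm_smul, norm_inv, Real.norm_of_nonneg (hW_pos x).le, inv_mul_le_iff₀' (hW_pos x)]
  let T (u : BoundedContinuousFunction X E) : BoundedContinuousFunction X E :=
    .ofNormedAddCommGroup (fun x => (W x)⁻¹ • (S (lift u) x - y₀ x))
      ((hW.inv₀ fun x => (hW_pos x).ne').smul ((hS _ (continuous_lift u)).sub hy₀))
      (q * ‖u‖ + C) fun x => norm_inv_smul_le <| calc
        ‖S (lift u) x - y₀ x‖ ≤ ‖S (lift u) x - S y₀ x‖ + ‖S y₀ x - y₀ x‖ :=
          norm_sub_le_norm_sub_add_norm_sub ..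
        _ ≤ q * ‖u‖ * W x + C * W x := add_le_add
          (hSq _ _ (continuous_lift u) hy₀ _ (norm_lift_sub u) x) (hC x)
        _ = (q * ‖u‖ + C) * W x := (add_mul ..).symm
  have hT : ContractingWith q T := by
    refine ⟨hq, LipschitzWith.of_dist_le_mul fun u v => ?_⟩
    refine (BoundedContinuousFunction.dist_le (by positivity)).2 fun x => ?_
    have hTx : T u x - T v x = (W x)⁻¹ • (S (lift u) x - S (lift v) x) := by
      rw [← sub_sub_sub_cancel_right (S (lift u) x) _ (y₀ x), smul_sub]
      rfl
    rw [dist_eq_norm, hTx]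
    exact norm_inv_smul_le <| hSq _ _ (continuous_lift u) (continuous_lift v) _
      (norm_lift_sub_lift u v) x
  obtain ⟨u, hu⟩ : ∃ u, T u = u := ⟨_, hT.fixedPoint_isFixedPt⟩
  refine ⟨lift u, continuous_lift u, funext fun x => ?_⟩
  have hux : (W x)⁻¹ • (S (lift u) x - y₀ x) = u x := congrArg (· x) hu
  rw [inv_smul_eq_iff₀ (hW_pos x).ne'] at hux
  exact sub_eq_iff_eq_add'.1 hux

end WeightedContraction

section RadialOperators

variable {E : Type*} [NormedAddCommGroup E] [NormedSpace ℝ E] {A : ℝ} {g h : ℝ → E}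

/-- The weighted mean `∫₀¹ τ^A g(sτ) dτ`. It is used because `p(r) = r • radialAverage A g r` is the
solution of `p' + (A / r) p = g` that is regular at `0`; the scaled form avoids the singular factor
`s^(-A)`. -/
def radialAverage (A : ℝ) (g : ℝ → E) (s : ℝ) : E := ∫ τ in (0 : ℝ)..1, τ ^ A • g (s * τ)

/-- The Green operator of the radial Laplacian: `y = radialPrimitive A g` solves
`y'' + (A / r) y' = g` for `r > 0`, with `y(0) = y'(0) = 0`. -/
def radialPrimitive (A : ℝ) (g : ℝ → E) (r : ℝ) : E := ∫ s in (0 : ℝ)..r, s • radialAverage A g s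

lemma continuous_radialAverage (hA : 0 ≤ A) (hg : Continuous g) :
    Continuous (radialAverage A g) := by
  apply intervalIntegral.continuous_parametric_intervalIntegral_of_continuous'
  have := Real.continuous_rpow_const hA
  fun_prop

lemma radialAverage_sub (hA : 0 ≤ A) (hg : Continuous g) (hh : Continuous h) :
    radialAverage A (g - h) = radialAverage A g - radialAverage A h := by
  ext s
  have := Real.continuous_rpow_const hA
  simp only [radialAverage, Pi.sub_apply, smul_sub]
  exact intervalIntegral.integral_sub (Continuous.intervalIntegrable (by fun_prop) _ _)
    (Continuous.intervalIntegrable (by fun_prop) _ _)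

lemma norm_radialAverage_le (hA : 0 ≤ A) {s C : ℝ} (hg : ∀ t, |t| ≤ |s| → ‖g t‖ ≤ C) :
    ‖radialAverage A g s‖ ≤ C := by
  have hC : ∀ τ ∈ uIoc (0 : ℝ) 1, ‖τ ^ A • g (s * τ)‖ ≤ C := by
    intro τ hτ
    rw [uIoc_of_le zero_le_one] at hτ
    have hτs : |s * τ| ≤ |s| := by
      rw [abs_mul, abs_of_pos hτ.1]
      exact mul_le_of_le_one_right (abs_nonneg s) hτ.2
    rw [norm_smul, Real.norm_of_nonneg (Real.rpow_nonneg hτ.1.le A)]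
    exact (mul_le_of_le_one_left (norm_nonneg _) (Real.rpow_le_one hτ.1.le hτ.2 hA)).trans
      (hg _ hτs)
  simpa [radialAverage] using intervalIntegral.norm_integral_le_of_norm_le_const hC

lemma smul_radialAverage_eq (A : ℝ) (g : ℝ → E) {s : ℝ} (hs : 0 < s) :
    s • radialAverage A g s = s ^ (-A) • ∫ t in (0 : ℝ)..s, t ^ A • g t := by
  have hscale : ∫ t in (0 : ℝ)..s, t ^ A • g t =
      s • ∫ τ in (0 : ℝ)..1, (s * τ) ^ A • g (s * τ) := by
    simpa using (intervalIntegral.smul_integral_comp_mul_left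
      (a := 0) (b := 1) (fun t => t ^ A • g t) s).symm
  have hfactor : ∫ τ in (0 : ℝ)..1, (s * τ) ^ A • g (s * τ) = s ^ A • radialAverage A g s := by
    rw [radialAverage, ← intervalIntegral.integral_smul]
    refine intervalIntegral.integral_congr fun τ hτ => ?_
    rw [uIcc_of_le zero_le_one] at hτ
    simp only [Real.mul_rpow hs.le hτ.1, mul_smul]
  rw [hscale, hfactor, smul_comm, smul_smul (s ^ (-A)), ← Real.rpow_add hs, neg_add_cancel,
    Real.rpow_zero, one_smul]

lemma radialPrimitive_eq_sq_smul_integral (A : ℝ) (g : ℝ → E) (r : ℝ) :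
    radialPrimitive A g r = r ^ 2 • ∫ σ in (0 : ℝ)..1, σ • radialAverage A g (r * σ) := by
  have := intervalIntegral.smul_integral_comp_mul_left (a := 0) (b := 1)
    (fun s => s • radialAverage A g s) r
  simp only [mul_zero, mul_one] at this
  simp only [radialPrimitive, ← this, sq, mul_smul, intervalIntegral.integral_smul]

lemma integral_mul_exp_sq {L : ℝ} (hL : L ≠ 0) (r : ℝ) :
    r ^ 2 * ∫ σ in (0 : ℝ)..1, σ * Real.exp (L * (r * σ) ^ 2) =
      (Real.exp (L * r ^ 2) - 1) / (2 * L) := by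
  have hderiv : ∀ σ ∈ uIcc (0 : ℝ) 1, HasDerivAt (fun σ => Real.exp (L * (r * σ) ^ 2) / (2 * L))
      (r ^ 2 * (σ * Real.exp (L * (r * σ) ^ 2))) σ := fun σ _ => by
    refine (((((hasDerivAt_id σ).const_mul r).pow 2).const_mul L).exp.div_const
      (2 * L)).congr_deriv ?_
    simp only [id, mul_one, Nat.cast_ofNat, Nat.add_one_sub_one, Pi.pow_apply, pow_one]
    field_simp
  rw [← intervalIntegral.integral_const_mul, intervalIntegral.integral_eq_sub_of_hasDerivAt hderiv
    (Continuous.intervalIntegrable (by fun_prop) _ _)]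
  simp [sub_div]

lemma norm_radialPrimitive_le (hA : 0 ≤ A) {L M : ℝ} (hL : 0 < L)
    (hg : ∀ t, ‖g t‖ ≤ M * Real.exp (L * t ^ 2)) (r : ℝ) :
    ‖radialPrimitive A g r‖ ≤ M / (2 * L) * Real.exp (L * r ^ 2) := by
  have hM : 0 ≤ M := by simpa using (norm_nonneg _).trans (hg 0)
  have hav (s : ℝ) : ‖radialAverage A g s‖ ≤ M * Real.exp (L * s ^ 2) :=
    norm_radialAverage_le hA fun t ht => (hg t).trans <| by
      have := sq_le_sq.2 ht
      gcongr
  have hint : ‖∫ σ in (0 : ℝ)..1, σ • radialAverage A g (r * σ)‖ ≤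
      ∫ σ in (0 : ℝ)..1, M * (σ * Real.exp (L * (r * σ) ^ 2)) := by
    refine intervalIntegral.norm_integral_le_of_norm_le zero_le_one (.of_forall fun σ hσ => ?_)
      (Continuous.intervalIntegrable (by fun_prop) _ _)
    rw [norm_smul, Real.norm_of_nonneg hσ.1.le, mul_left_comm]
    exact mul_le_mul_of_nonneg_left (hav _) hσ.1.le
  calc ‖radialPrimitive A g r‖
      = r ^ 2 * ‖∫ σ in (0 : ℝ)..1, σ • radialAverage A g (r * σ)‖ := by
        rw [radialPrimitive_eq_sq_smul_integral, norm_smul, Real.norm_of_nonneg (sq_nonneg r)]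
    _ ≤ r ^ 2 * ∫ σ in (0 : ℝ)..1, M * (σ * Real.exp (L * (r * σ) ^ 2)) := by gcongr
    _ = M * ((Real.exp (L * r ^ 2) - 1) / (2 * L)) := by
        rw [intervalIntegral.integral_const_mul, mul_left_comm, integral_mul_exp_sq hL.ne']
    _ ≤ M * (Real.exp (L * r ^ 2) / (2 * L)) := by gcongr; linarith
    _ = M / (2 * L) * Real.exp (L * r ^ 2) := by ring

lemma radialPrimitive_sub (hA : 0 ≤ A) (hg : Continuous g) (hh : Continuous h) :
    radialPrimitive A (g - h) = radialPrimitive A g - radialPrimitive A h := by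
  ext r
  have hg' := continuous_radialAverage hA hg
  have hh' := continuous_radialAverage hA hh
  simp only [radialPrimitive, radialAverage_sub hA hg hh, Pi.sub_apply, smul_sub]
  exact intervalIntegral.integral_sub (Continuous.intervalIntegrable (by fun_prop) _ _)
    (Continuous.intervalIntegrable (by fun_prop) _ _)

variable [CompleteSpace E]

lemma hasDerivAt_smul_radialAverage (hA : 0 ≤ A) (hg : Continuous g) {r : ℝ} (hr : 0 < r) :
    HasDerivAt (fun s => s • radialAverage A g s)
      (g r - (A / r) • r • radialAverage A g r) r := by
  have hcont : Continuous fun t => t ^ A • g t := (Real.continuous_rpow_const hA).smul hg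
  have hprod := (Real.hasDerivAt_rpow_const (p := -A) (Or.inl hr.ne')).smul
    (hcont.integral_hasStrictDerivAt 0 r).hasDerivAt
  refine (hprod.congr_of_eventuallyEq ?_).congr_deriv ?_
  · filter_upwards [lt_mem_nhds hr] with s hs using smul_radialAverage_eq A g hs
  · rw [smul_radialAverage_eq A g hr, smul_smul, smul_smul, ← Real.rpow_add hr, neg_add_cancel,
      Real.rpow_zero, one_smul, Real.rpow_sub_one hr.ne', sub_eq_add_neg, ← neg_smul]
    congr 2
    ring

lemma hasDerivAt_radialPrimitive (hA : 0 ≤ A) (hg : Continuous g) (r : ℝ) :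
    HasDerivAt (radialPrimitive A g) (r • radialAverage A g r) r :=
  ((continuous_id.smul (continuous_radialAverage hA hg)).integral_hasStrictDerivAt 0 r).hasDerivAt

lemma continuous_radialPrimitive (hA : 0 ≤ A) (hg : Continuous g) :
    Continuous (radialPrimitive A g) :=
  continuous_iff_continuousAt.2 fun r => (hasDerivAt_radialPrimitive hA hg r).continuousAt

theorem exists_eq_sub_radialPrimitive_comp (hA : 0 ≤ A) {f : E → E} {K : ℝ≥0}
    (hf : LipschitzWith K f) (c : E) :
    ∃ y : ℝ → E, Continuous y ∧ ∀ r, y r = c - radialPrimitive A (f ∘ y) r := by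
  let L : ℝ := K + 1
  have hL : 0 < L := by positivity
  let q : ℝ≥0 := K / (2 * (K + 1))
  have hq : q < 1 := (div_lt_one (by positivity)).2 (lt_of_lt_of_le (lt_add_one K)
    (le_mul_of_one_le_left' one_le_two))
  have hbase (r : ℝ) : ‖c - radialPrimitive A (f ∘ fun _ => c) r - c‖ ≤
      ‖f c‖ / (2 * L) * Real.exp (L * r ^ 2) := by
    rw [sub_sub_cancel_left, norm_neg]
    exact norm_radialPrimitive_le hA hL (fun t =>
      le_mul_of_one_le_right (norm_nonneg _) (Real.one_le_exp (by positivity))) r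
  have hcontr (y z : ℝ → E) (hy : Continuous y) (hz : Continuous z) (D : ℝ)
      (hyz : ∀ t, ‖y t - z t‖ ≤ D * Real.exp (L * t ^ 2)) (r : ℝ) :
      ‖c - radialPrimitive A (f ∘ y) r - (c - radialPrimitive A (f ∘ z) r)‖ ≤
        q * D * Real.exp (L * r ^ 2) := by
    have hdiff (t : ℝ) : ‖(f ∘ z - f ∘ y) t‖ ≤ K * D * Real.exp (L * t ^ 2) := calc
      ‖f (z t) - f (y t)‖ ≤ K * ‖z t - y t‖ := hf.norm_sub_le _ _
      _ ≤ K * (D * Real.exp (L * t ^ 2)) := by rw [norm_sub_rev]; gcongr; exact hyz t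
      _ = K * D * Real.exp (L * t ^ 2) := (mul_assoc ..).symm
    have hSub := norm_radialPrimitive_le hA hL hdiff r
    rw [radialPrimitive_sub hA (hf.continuous.comp hz) (hf.continuous.comp hy)] at hSub
    rw [sub_sub_sub_cancel_left]
    refine hSub.trans_eq ?_
    simp only [q, L, NNReal.coe_div, NNReal.coe_mul, NNReal.coe_add, NNReal.coe_one,
      NNReal.coe_ofNat]
    ring
  obtain ⟨y, hy, hSy⟩ := exists_continuous_fixedPoint_of_weighted_contraction
    (W := fun r => Real.exp (L * r ^ 2)) (S := fun y r => c - radialPrimitive A (f ∘ y) r)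
    (by fun_prop) (fun _ => Real.exp_pos _)
    (fun y hy => continuous_const.sub (continuous_radialPrimitive hA (hf.continuous.comp hy)))
    continuous_const hbase hq hcontr
  exact ⟨y, hy, fun r => (congrFun hSy r).symm⟩

end RadialOperators

section RadialSolution

variable {E : Type*} [NormedAddCommGroup E] [NormedSpace ℝ E]

/-- `y`, with derivative `p`, solves `y'' + (A / r) y' + f(y) = 0` on `(0, ∞)` with `y(0) = c` and
`y'(0) = 0`. The derivative is recorded as a function on all of `ℝ` so that the initial conditions
can be expressed by continuity and values at `0`; nothing is asked for negative `r`. -/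
structure IsRadialSolution (A : ℝ) (f : E → E) (c : E) (y p : ℝ → E) : Prop where
  continuous : Continuous y
  continuous_velocity : Continuous p
  apply_zero : y 0 = c
  velocity_zero : p 0 = 0
  hasDerivAt : ∀ r > 0, HasDerivAt y (p r) r
  hasDerivAt_velocity : ∀ r > 0, HasDerivAt p (-(A / r) • p r - f (y r)) r

variable {A : ℝ} {f g : E → E} {c : E} {y p : ℝ → E}

theorem exists_isRadialSolution_of_lipschitzWith [CompleteSpace E] (hA : 0 ≤ A) {K : ℝ≥0}
    (hf : LipschitzWith K f) (c : E) : ∃ y p, IsRadialSolution A f c y p := by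
  obtain ⟨y, hy, hyr⟩ := exists_eq_sub_radialPrimitive_comp hA hf c
  have hfy : Continuous (f ∘ y) := hf.continuous.comp hy
  have hav := continuous_radialAverage hA hfy
  refine ⟨y, fun r => -(r • radialAverage A (f ∘ y) r), hy, by fun_prop, ?_, by simp,
    fun r _ => ?_, fun r hr => ?_⟩
  · simp [hyr, radialPrimitive]
  · rw [funext hyr]
    exact funext hyr ▸ (hasDerivAt_radialPrimitive hA hfy r).const_sub c
  · exact (hasDerivAt_smul_radialAverage hA hfy hr).neg.congr_deriv (by simp)

namespace IsRadialSolution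

lemma congr_force (h : IsRadialSolution A f c y p) (hfg : ∀ r > 0, f (y r) = g (y r)) :
    IsRadialSolution A g c y p :=
  { h with hasDerivAt_velocity := fun r hr => hfg r hr ▸ h.hasDerivAt_velocity r hr }

lemma deriv_eq (h : IsRadialSolution A f c y p) {r : ℝ} (hr : 0 < r) : deriv y r = p r :=
  (h.hasDerivAt r hr).deriv

lemma deriv_deriv_eq (h : IsRadialSolution A f c y p) {r : ℝ} (hr : 0 < r) :
    deriv (deriv y) r = -(A / r) • p r - f (y r) := by
  have hderiv : deriv y =ᶠ[𝓝 r] p := by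
    filter_upwards [lt_mem_nhds hr] with s hs using h.deriv_eq hs
  rw [hderiv.deriv_eq, (h.hasDerivAt_velocity r hr).deriv]

lemma tendsto (h : IsRadialSolution A f c y p) : Tendsto y (𝓝[>] 0) (𝓝 c) :=
  h.apply_zero ▸ (h.continuous.tendsto 0).mono_left nhdsWithin_le_nhds

lemma tendsto_deriv (h : IsRadialSolution A f c y p) : Tendsto (deriv y) (𝓝[>] 0) (𝓝 0) := by
  have hp : Tendsto p (𝓝[>] 0) (𝓝 (p 0)) :=
    (h.continuous_velocity.tendsto 0).mono_left nhdsWithin_le_nhds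
  rw [h.velocity_zero] at hp
  refine hp.congr' ?_
  filter_upwards [self_mem_nhdsWithin] with r hr using (h.deriv_eq hr).symm

lemma contDiffOn_nat (h : IsRadialSolution A f c y p) (n : ℕ) (hf : ContDiff ℝ n f) :
    ContDiffOn ℝ n y (Ioi 0) ∧ ContDiffOn ℝ n p (Ioi 0) := by
  have hdy : DifferentiableOn ℝ y (Ioi 0) := fun r hr =>
    (h.hasDerivAt r hr).differentiableAt.differentiableWithinAt
  have hdp : DifferentiableOn ℝ p (Ioi 0) := fun r hr =>
    (h.hasDerivAt_velocity r hr).differentiableAt.differentiableWithinAt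
  induction n with
  | zero => exact ⟨contDiffOn_zero.2 hdy.continuousOn, contDiffOn_zero.2 hdp.continuousOn⟩
  | succ n ih =>
    have hf' : ContDiff ℝ n f := hf.of_le (by exact_mod_cast n.le_succ)
    obtain ⟨hy, hp⟩ := ih hf'
    have hrhs : ContDiffOn ℝ n (fun r => -(A / r) • p r - f (y r)) (Ioi 0) :=
      ((contDiffOn_const.div contDiffOn_id fun r hr => ne_of_gt hr).neg.smul hp).sub
        (hf'.comp_contDiffOn hy)
    push_cast
    simp only [contDiffOn_succ_iff_deriv_of_isOpen isOpen_Ioi]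
    exact ⟨⟨hdy, by simp, hp.congr fun r hr => h.deriv_eq hr⟩, hdp, by simp,
      hrhs.congr fun r hr => (h.hasDerivAt_velocity r hr).deriv⟩

theorem contDiffOn (h : IsRadialSolution A f c y p) (hf : ContDiff ℝ (⊤ : ℕ∞) f) :
    ContDiffOn ℝ (⊤ : ℕ∞) y (Ioi 0) :=
  contDiffOn_infty.2 fun n =>
    (h.contDiffOn_nat n (hf.of_le (by exact_mod_cast le_top))).1

end IsRadialSolution

end RadialSolution

section Energy

variable {A c : ℝ} {f F y p : ℝ → ℝ}

namespace IsRadialSolution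

lemma hasDerivAt_energy (h : IsRadialSolution A f c y p) (hF : ∀ x, HasDerivAt F (f x) x) {r : ℝ}
    (hr : 0 < r) : HasDerivAt (fun r => p r ^ 2 / 2 + F (y r)) (-(A / r) * p r ^ 2) r := by
  refine ((((h.hasDerivAt_velocity r hr).pow 2).div_const 2).add
    ((hF (y r)).comp r (h.hasDerivAt r hr))).congr_deriv ?_
  simp only [smul_eq_mul, Nat.cast_ofNat, Nat.add_one_sub_one, pow_one]
  ring

lemma antitoneOn_energy (hA : 0 ≤ A) (h : IsRadialSolution A f c y p)
    (hF : ∀ x, HasDerivAt F (f x) x) : AntitoneOn (fun r => p r ^ 2 / 2 + F (y r)) (Ici 0) := by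
  have hFc : Continuous F := continuous_iff_continuousAt.2 fun x => (hF x).continuousAt
  have hcont : Continuous fun r => p r ^ 2 / 2 + F (y r) :=
    ((h.continuous_velocity.pow 2).div_const 2).add (hFc.comp h.continuous)
  refine antitoneOn_of_hasDerivWithinAt_nonpos (f' := fun r => -(A / r) * p r ^ 2)
    (convex_Ici 0) hcont.continuousOn (fun r hr => ?_) fun r hr => ?_ <;>
    rw [interior_Ici] at hr
  · exact (h.hasDerivAt_energy hF hr).hasDerivWithinAt
  · exact mul_nonpos_of_nonpos_of_nonneg (neg_nonpos.2 (div_nonneg hA (le_of_lt hr)))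
      (sq_nonneg _)

theorem potential_le (hA : 0 ≤ A) (h : IsRadialSolution A f c y p)
    (hF : ∀ x, HasDerivAt F (f x) x) {r : ℝ} (hr : 0 ≤ r) : F (y r) ≤ F c := by
  have henergy := h.antitoneOn_energy hA hF self_mem_Ici hr hr
  simp only [h.velocity_zero, h.apply_zero] at henergy
  nlinarith [sq_nonneg (p r)]

end IsRadialSolution

end Energy

section RestoringForce

variable {f : ℝ → ℝ} {k a : ℝ}

/-- With the sign convention `y'' = -f(y)`, the force `f` pulls towards `a` at least as strongly
as a spring of stiffness `k`. -/
def IsRestoring (f : ℝ → ℝ) (k a : ℝ) : Prop := ∀ x, k * (x - a) ^ 2 ≤ f x * (x - a)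

lemma IsRestoring.mul_sub_le (hf : IsRestoring f k a) {x : ℝ} (hx : a < x) :
    k * (x - a) ≤ f x := by
  have := hf x
  rw [sq, ← mul_assoc] at this
  exact le_of_mul_le_mul_right this (sub_pos.2 hx)

lemma IsRestoring.le_mul_sub (hf : IsRestoring f k a) {x : ℝ} (hx : x < a) :
    f x ≤ k * (x - a) := by
  have := hf x
  rw [sq, ← mul_assoc] at this
  exact (mul_le_mul_right_of_neg (sub_neg.2 hx)).1 this

lemma IsRestoring.mul_sq_div_two_le_integral (hf : IsRestoring f k a) (hfc : Continuous f) (x : ℝ) :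
    k * (x - a) ^ 2 / 2 ≤ ∫ t in a..x, f t := by
  have hquad : ∫ t in a..x, k * (t - a) = k * (x - a) ^ 2 / 2 := by
    rw [intervalIntegral.integral_const_mul, intervalIntegral.integral_comp_sub_right (fun t => t),
      integral_id]
    ring
  have hf_int (u v) : IntervalIntegrable f volume u v := hfc.intervalIntegrable u v
  have hk_int (u v) : IntervalIntegrable (fun t => k * (t - a)) volume u v :=
    Continuous.intervalIntegrable (by fun_prop) u v
  rw [← hquad]
  rcases le_total a x with hax | hxa
  · exact intervalIntegral.integral_mono_on_of_le_Ioo hax (hk_int _ _) (hf_int _ _)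
      fun t ht => hf.mul_sub_le ht.1
  · rw [intervalIntegral.integral_symm x a, intervalIntegral.integral_symm x a, neg_le_neg_iff]
    exact intervalIntegral.integral_mono_on_of_le_Ioo hxa (hf_int _ _) (hk_int _ _)
      fun t ht => hf.le_mul_sub ht.2

/-- The continuous function that agrees with `f` on `[l, u]` and is affine of slope `k` on either
side. Unlike a constant extension, it stays `k`-restoring. -/
def affineExtension (f : ℝ → ℝ) (k : ℝ) {l u : ℝ} (h : l ≤ u) (x : ℝ) : ℝ :=
  f (projIcc l u h x) + k * (x - projIcc l u h x)

variable {l u : ℝ}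

lemma affineExtension_of_mem (f : ℝ → ℝ) (k : ℝ) (h : l ≤ u) {x : ℝ} (hx : x ∈ Icc l u) :
    affineExtension f k h x = f x := by
  simp [affineExtension, projIcc_of_mem h hx]

lemma exists_lipschitzWith_affineExtension {K : ℝ≥0} (hf : LipschitzOnWith K f (Icc l u)) (k : ℝ)
    (h : l ≤ u) : ∃ K', LipschitzWith K' (affineExtension f k h) := by
  have hproj : LipschitzWith 1 fun x => (projIcc l u h x : ℝ) :=
    (LipschitzWith.subtype_val _).comp (LipschitzWith.projIcc h) |>.weaken (by simp)
  have hfproj : LipschitzWith (K * 1) fun x => f (projIcc l u h x) :=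
    hf.to_restrict.comp (LipschitzWith.projIcc h)
  exact ⟨_, hfproj.add ((lipschitzWith_smul k).comp (LipschitzWith.id.sub hproj))⟩

lemma isRestoring_affineExtension (hf : IsRestoring f k a) (ha : a ∈ Ioo l u) (h : l ≤ u) :
    IsRestoring (affineExtension f k h) k a := by
  intro x
  rcases lt_or_ge x l with hxl | hlx
  · have hfl := hf.le_mul_sub ha.1
    simp only [affineExtension, projIcc_of_le_left h hxl.le]
    nlinarith [ha.1]
  rcases lt_or_ge u x with hux | hxu
  · have hfu := hf.mul_sub_le ha.2
    simp only [affineExtension, projIcc_of_right_le h hux.le]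
    nlinarith [ha.2]
  · rw [affineExtension_of_mem f k h ⟨hlx, hxu⟩]
    exact hf x

theorem IsRadialSolution.mul_sq_le {A c : ℝ} {y p : ℝ → ℝ} (hA : 0 ≤ A)
    (h : IsRadialSolution A f c y p) (hf : IsRestoring f k a) (hfc : Continuous f) {r : ℝ}
    (hr : 0 ≤ r) : k * (y r - a) ^ 2 / 2 ≤ ∫ t in a..c, f t :=
  (hf.mul_sq_div_two_le_integral hfc (y r)).trans <|
    h.potential_le hA (fun x => (hfc.integral_hasStrictDerivAt a x).hasDerivAt) hr

theorem IsRestoring.exists_isRadialSolution {A : ℝ} (hA : 0 ≤ A) (hf : IsRestoring f k a)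
    (hk : 0 < k) (hfl : LocallyLipschitz f) (c : ℝ) : ∃ y p, IsRadialSolution A f c y p := by
  set Fc := ∫ t in a..c, f t
  obtain ⟨ρ, hρ, hFρ⟩ : ∃ ρ > 0, Fc < k / 2 * ρ ^ 2 :=
    ((eventually_gt_atTop 0).and <| ((tendsto_pow_atTop two_ne_zero).const_mul_atTop
      (half_pos hk)).eventually_gt_atTop Fc).exists
  have habs_lt {x : ℝ} (hx : k * (x - a) ^ 2 / 2 ≤ Fc) : |x - a| < ρ := by
    refine abs_lt_of_sq_lt_sq ?_ hρ.le
    nlinarith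
  have hmem {x : ℝ} (hx : |x - a| < ρ) : x ∈ Icc (a - ρ) (a + ρ) := by
    rw [abs_sub_lt_iff] at hx
    constructor <;> linarith
  have hle : a - ρ ≤ a + ρ := by linarith
  have ha : a ∈ Ioo (a - ρ) (a + ρ) := by constructor <;> linarith
  let g := affineExtension f k hle
  have hg : IsRestoring g k a := isRestoring_affineExtension hf ha hle
  obtain ⟨K, hfK⟩ : ∃ K, LipschitzOnWith K f (Icc (a - ρ) (a + ρ)) :=
    hfl.locallyLipschitzOn.exists_lipschitzOnWith_of_compact isCompact_Icc
  obtain ⟨K', hgK⟩ := exists_lipschitzWith_affineExtension hfK k hle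
  obtain ⟨y, p, h⟩ := exists_isRadialSolution_of_lipschitzWith hA hgK c
  have hc : c ∈ Icc (a - ρ) (a + ρ) :=
    hmem (habs_lt (hf.mul_sq_div_two_le_integral hfl.continuous c))
  have hgFc : ∫ t in a..c, g t = Fc := intervalIntegral.integral_congr fun t ht =>
    affineExtension_of_mem f k hle (uIcc_subset_Icc (Ioo_subset_Icc_self ha) hc ht)
  refine ⟨y, p, h.congr_force fun r hr => affineExtension_of_mem f k hle (hmem (habs_lt ?_))⟩
  exact hgFc ▸ h.mul_sq_le hA hg hgK.continuous hr.le

end RestoringForce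

section Oscillation

lemma exists_lt_of_hasDerivAt_le_neg {g g' : ℝ → ℝ} {M δ : ℝ} (hδ : 0 < δ)
    (hg : ∀ r ≥ M, HasDerivAt g (g' r) r) (hg' : ∀ r ≥ M, g' r ≤ -δ) (C : ℝ) :
    ∃ r ≥ M, g r < C := by
  have hdecay : ∀ r ≥ M, g r - g M ≤ -δ * (r - M) := fun r hr =>
    (convex_Ici M).image_sub_le_mul_sub_of_deriv_le
      (fun x hx => (hg x hx).continuousAt.continuousWithinAt)
      (fun x hx => (hg x (interior_subset hx)).differentiableAt.differentiableWithinAt)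
      (fun x hx => (hg x (interior_subset hx)).deriv ▸ hg' x (interior_subset hx))
      M self_mem_Ici r hr hr
  have htendsto : Tendsto (fun r => g M + -δ * (r - M)) atTop atBot :=
    tendsto_atBot_add_const_left _ _ <|
      (tendsto_atTop_add_const_right _ _ tendsto_id).const_mul_atTop_of_neg (neg_neg_of_pos hδ)
  obtain ⟨r, hrC, hrM⟩ := ((htendsto.eventually_lt_atBot C).and (eventually_ge_atTop M)).exists
  exact ⟨r, hrM, by linarith [hdecay r hrM]⟩

lemma not_forall_ge_riccati {q q' : ℝ → ℝ} {M δ : ℝ} (hδ : 0 < δ)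
    (hq : ∀ r ≥ M, HasDerivAt q (q' r) r) : ¬ ∀ r ≥ M, q' r ≤ -δ * (1 + q r ^ 2) := by
  intro hriccati
  obtain ⟨r, -, hr⟩ := exists_lt_of_hasDerivAt_le_neg hδ (fun r hr => (hq r hr).arctan)
    (fun r hr => by
      rw [one_div, inv_mul_le_iff₀' (by positivity)]
      exact hriccati r hr) (-(Real.pi / 2))
  exact hr.not_gt (Real.neg_pi_div_two_lt_arctan _)

theorem IsRadialSolution.exists_gt_eq {A c k a : ℝ} {f y p : ℝ → ℝ}
    (h : IsRadialSolution A f c y p) (hk : 0 < k) (hf : IsRestoring f k a) (M : ℝ) :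
    ∃ R > M, y R = a := by
  by_contra! hne
  obtain ⟨M', hM'⟩ : ∃ M', ∀ r ≥ M', M < r ∧ 0 < r ∧ A ^ 2 ≤ k * r ^ 2 :=
    eventually_atTop.1 <| (eventually_gt_atTop M).and <| (eventually_gt_atTop 0).and <|
      ((tendsto_pow_atTop two_ne_zero).const_mul_atTop hk).eventually_ge_atTop _
  have hya : ∀ r ≥ M', y r - a ≠ 0 := fun r hr => sub_ne_zero.2 (hne r (hM' r hr).1)
  let q r := p r / (y r - a)
  have hq : ∀ r ≥ M', HasDerivAt q (-(A / r) * q r - f (y r) / (y r - a) - q r ^ 2) r := by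
    intro r hr
    have hr0 := (hM' r hr).2.1
    have hyr := hya r hr
    refine ((h.hasDerivAt_velocity r hr0).div ((h.hasDerivAt r hr0).sub_const a)
      hyr).congr_deriv ?_
    simp only [q, smul_eq_mul]
    field_simp
  refine not_forall_ge_riccati (δ := min (k / 2) (1 / 2)) (by positivity) hq fun r hr => ?_
  obtain ⟨-, hr0, hAr⟩ := hM' r hr
  have hstiff : k ≤ f (y r) / (y r - a) := by
    rw [← mul_div_mul_right _ _ (hya r hr), ← sq, le_div_iff₀ (sq_pos_of_ne_zero (hya r hr))]
    exact hf _
  have hfriction : -(A / r) * q r ≤ k / 2 + q r ^ 2 / 2 := by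
    have : (A / r) ^ 2 ≤ k := by
      rwa [div_pow, div_le_iff₀ (by positivity)]
    nlinarith [sq_nonneg (A / r + q r)]
  nlinarith [min_le_left (k / 2) (1 / 2 : ℝ), min_le_right (k / 2) (1 / 2 : ℝ), sq_nonneg (q r)]

end Oscillation

theorem exists_oscillating_radial_solution {A k a : ℝ} {f : ℝ → ℝ} (hA : 0 ≤ A) (hk : 0 < k)
    (hf : IsRestoring f k a) (hf_smooth : ContDiff ℝ (⊤ : ℕ∞) f) (c : ℝ) :
    ∃ y : ℝ → ℝ, ContDiffOn ℝ (⊤ : ℕ∞) y (Ioi 0) ∧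
      (∀ r > 0, r * deriv (deriv y) r + A * deriv y r + r * f (y r) = 0) ∧
      Tendsto y (𝓝[>] 0) (𝓝 c) ∧ Tendsto (deriv y) (𝓝[>] 0) (𝓝 0) ∧ ∀ M, ∃ R > M, y R = a := by
  obtain ⟨y, p, h⟩ := hf.exists_isRadialSolution hA hk
    (hf_smooth.of_le (by simp : (1 : WithTop ℕ∞) ≤ _)).locallyLipschitz c
  refine ⟨y, h.contDiffOn hf_smooth, fun r hr => ?_, h.tendsto, h.tendsto_deriv,
    h.exists_gt_eq hk hf⟩
  rw [h.deriv_deriv_eq hr, h.deriv_eq hr, smul_eq_mul]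
  field_simp
  ring

lemma isRestoring_sq_mul_sinh_sub {κ : ℝ} (hκ : κ ≠ 0) (lam : ℝ) :
    IsRestoring (fun x => κ ^ 2 * Real.sinh x - lam) (κ ^ 2) (Real.arsinh (lam / κ ^ 2)) := by
  intro x
  set a := Real.arsinh (lam / κ ^ 2) with ha
  have hlam : lam = κ ^ 2 * Real.sinh a := by
    rw [ha, Real.sinh_arsinh]
    field_simp
  have hmono : Monovary (fun x => Real.sinh x - x) id :=
    Real.sinh_sub_id_strictMono.monotone.monovary monotone_id
  have hsinh : 0 ≤ (Real.sinh x - x - (Real.sinh a - a)) * (x - a) := hmono.sub_mul_sub_nonneg a x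
  simp only [hlam]
  linear_combination κ ^ 2 * hsinh

theorem npbe_singular_bessel_solution_general {κt A : ℝ} (lam c : ℝ) (hκ : κt ≠ 0) (hA : 0 ≤ A) :
    ∃ y : ℝ → ℝ, ContDiffOn ℝ (⊤ : ℕ∞) y (Ioi (0 : ℝ)) ∧
      (∀ r ∈ Ioi (0 : ℝ), r * deriv (deriv y) r + A * deriv y r + κt ^ 2 * r * Real.sinh (y r) =
        r * lam) ∧
      Tendsto y (𝓝[>] 0) (𝓝 c) ∧ Tendsto (deriv y) (𝓝[>] 0) (𝓝 0) ∧
      ∀ M, ∃ R > M, y R = Real.arsinh (lam / κt ^ 2) := by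
  obtain ⟨y, hy, hode, hrest⟩ := exists_oscillating_radial_solution hA (by positivity)
    (isRestoring_sq_mul_sinh_sub hκ lam)
    ((contDiff_const.mul Real.contDiff_sinh).sub contDiff_const) c
  exact ⟨y, hy, fun r hr => by linear_combination hode r hr, hrest⟩

/-- Lemma `NonuniqueNonlinearBessel`: for every κ̃ > 0, λ ≥ 0, A ≥ 0
and c ∈ ℝ there exist R > C_B/κ̃ and y ∈ C^∞_loc((0,∞); ℝ) with
  r y'' + A y' + κ̃² r sinh y = r λ on (0,∞),
  y(0+) = c, y'(0+) = 0, and y(R) = arcsinh(λ/κ̃²). -/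
theorem npbe_singular_bessel_solution
    (d : ℕ) (hd : 1 ≤ d) (κt lam A c : ℝ)
    (hκ : 0 < κt) (hlam : 0 ≤ lam) (hA : 0 ≤ A)
    (CB : ℝ) (hCB0 : 0 < CB)
    (hCB : ∀ R : ℝ, 0 < R → lambda1 (Metric.ball (0 : Euc d) R) = CB / R^2) :
    ∃ R : ℝ, CB / κt < R ∧ ∃ y : ℝ → ℝ,
      ContDiffOn ℝ (⊤ : ℕ∞) y (Ioi (0 : ℝ)) ∧
      (∀ r ∈ Ioi (0 : ℝ),
        r * deriv (deriv y) r + A * deriv y r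
          + κt^2 * r * Real.sinh (y r) = r * lam) ∧
      Tendsto y (nhdsWithin 0 (Ioi 0)) (nhds c) ∧
      Tendsto (deriv y) (nhdsWithin 0 (Ioi 0)) (nhds 0) ∧
      y R = Real.arsinh (lam / κt^2) := by
  obtain ⟨y, hy, hode, hy_zero, hy'_zero, hosc⟩ :=
    npbe_singular_bessel_solution_general lam c hκ.ne' hA
  obtain ⟨R, hR, hyR⟩ := hosc (CB / κt)
  exact ⟨R, hR, y, hy, hode, hy_zero, hy'_zero, hyR⟩
end
end

section
/- Let Ω ⊂ ℝ³ be bounded and convex and let C_S(2) be the norm of the embedding H²(Ω) ↪ L^∞(Ω). For every p ∈ (3, 6), |Ω|^{−1/2} ≤ C_S(2) ≤ 2^{1/p} C_{2,p} C_{p,∞}, where C_{p,q} denotes a constant with ‖u‖_{L^q(Ω)} ≤ C_{p,q}‖u‖_{W^{1,p}(Ω)} for all u ∈ W^{1,p}(Ω). If moreover |Ω| = C d_Ω³ for some C > 0, then there exists d₀ > 0 such that for every d_Ω ≤ d₀, |Ω|^{−1/2} ≤ C_S(2) ≤ 2^{3/2} |Ω|^{−1/2}. -/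
open MeasureTheory Set Filter
open scoped ENNReal NNReal Topology BigOperators

noncomputable section

/-- The L^p(Ω) norm (p a real exponent). -/
def LpN {d : ℕ} (Ω : Set (Euc d)) (p : ℝ) (u : Euc d → ℂ) : ℝ :=
  (eLpNorm u (ENNReal.ofReal p) (volume.restrict Ω)).toReal

/-- A bundled W^{1,p}(Ω) function: the function and its weak partial derivatives,
all in L^p(Ω). -/
structure W1Fun (d : ℕ) (Ω : Set (Euc d)) (p : ℝ) where
  u : Euc d → ℂ
  du : Fin d → Euc d → ℂ
  hu : MemLp u (ENNReal.ofReal p) (volume.restrict Ω)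
  hdu : ∀ i, MemLp (du i) (ENNReal.ofReal p) (volume.restrict Ω)
  hw : ∀ i, IsWeakDeriv Ω i u (du i)

/-- The W^{1,p}(Ω) norm  ( ‖u‖_p^p + ∑_i ‖∂_i u‖_p^p )^{1/p}. -/
def W1Fun.norm {d : ℕ} {Ω : Set (Euc d)} {p : ℝ} (U : W1Fun d Ω p) : ℝ :=
  ((LpN Ω p U.u)^p + ∑ i, (LpN Ω p (U.du i))^p) ^ (1/p)

/-- C_S(2) : the operator norm of the embedding H²(Ω) ↪ L^∞(Ω). -/
def CS2 {d : ℕ} (Ω : Set (Euc d)) : ℝ :=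
  sInf {C : ℝ | 0 ≤ C ∧ ∀ U : SobFun d Ω 2, LinfN Ω U.u ≤ C * SobNormInt U}

/-!
Both upper bounds come from one representation formula on a convex set. Let `η` be a smooth weight
of integral one supported in `Ω`, and average `u` against the image of `η` under the homothety of
ratio `t` centred at `x`: at `t = 1` this is the mean `∫ η u`, and as `t → 0` it tends to `u x` for
almost every `x`. Its `t`-derivative is an integral of `∇u` against a vector field which is a test
field for `x ∈ Ω` because `Ω` is convex, and which is at most `t^{β-d} |z - x|^{-β}` up to a
constant, for any `β ≥ 0`. For `β > d - 1` this is integrable in `t`, so `|u - ∫ η u|` is dominated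
by a Riesz potential of `|∇u|`. Schur's test bounds this potential from `L^q` to `L^p`, with
constants depending only on the diameter and the volume.

Applied to `u` and its first derivatives, this puts an `H²` function in `W^{1,p}`, which makes the
two given embeddings composable. For small domains, `L² → L⁴ → L^∞` gives
`2^{3/4} |Ω|^{-1/2}` up to a relative error which is a positive power of the diameter. The lower
bound comes from testing the embedding on the constant function `1`.
-/

theorem norm_sub_le_of_norm_deriv_le_rpow {G : Type*} [NormedAddCommGroup G] [NormedSpace ℝ G]
    {F F' : ℝ → G} {L : G} {α K : ℝ} (hα : 0 < α)
    (hF : ∀ t ∈ Ioc (0 : ℝ) 1, HasDerivAt F (F' t) t)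
    (hF' : ∀ t ∈ Ioc (0 : ℝ) 1, ‖F' t‖ ≤ t ^ (α - 1) * K) (hL : Tendsto F (𝓝[>] 0) (𝓝 L)) :
    ‖L - F 1‖ ≤ K / α := by
  have hK : 0 ≤ K := by simpa using (norm_nonneg _).trans (hF' 1 (by simp))
  refine le_of_tendsto (hL.sub_const (F 1)).norm ?_
  filter_upwards [Ioc_mem_nhdsGT (zero_lt_one' ℝ)] with ε hε
  have hpos : ∀ {t}, t ∈ Icc ε 1 → t ∈ Ioc (0 : ℝ) 1 := fun ht => ⟨hε.1.trans_le ht.1, ht.2⟩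
  have hB : ∀ t ∈ Icc ε 1,
      HasDerivAt (fun s : ℝ => (s ^ α - ε ^ α) / α * K) (t ^ (α - 1) * K) t := fun t ht => by
    refine ((((Real.hasDerivAt_rpow_const (p := α) (Or.inl (hpos ht).1.ne')).sub_const
      (ε ^ α)).div_const α).mul_const K).congr_deriv ?_
    rw [mul_div_cancel_left₀ _ hα.ne']
  have hmean : ‖F 1 - F ε‖ ≤ (1 ^ α - ε ^ α) / α * K :=
    image_norm_le_of_norm_deriv_right_le_deriv_boundary'
      (fun t ht => ((hF t (hpos ht)).continuousAt.continuousWithinAt).sub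
        continuousWithinAt_const)
      (fun t ht => ((hF t (hpos (Ico_subset_Icc_self ht))).sub_const _).hasDerivWithinAt)
      (by simp)
      (fun t ht => (hB t ht).continuousAt.continuousWithinAt)
      (fun t ht => (hB t (Ico_subset_Icc_self ht)).hasDerivWithinAt)
      (fun t ht => hF' t (hpos (Ico_subset_Icc_self ht))) (right_mem_Icc.2 hε.2)
  calc ‖F ε - F 1‖ ≤ (1 - ε ^ α) / α * K := by rw [norm_sub_rev]; simpa using hmean
    _ ≤ 1 / α * K := by gcongr; linarith [Real.rpow_nonneg hε.1.le α]
    _ = K / α := by ring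

section Schur

variable {X : Type*} [MeasurableSpace X] {μ : Measure X}

theorem lintegral_mul_rpow_le {g κ : X → ℝ≥0∞} (hg : AEMeasurable g μ) (hκ : AEMeasurable κ μ)
    {q s : ℝ} (hq : 1 ≤ q) (hs : 0 ≤ s) (hsq : s ≤ q⁻¹) :
    ∫⁻ z, g z * κ z ^ (1 - q⁻¹ + s) ∂μ ≤
      (∫⁻ z, g z ^ q * κ z ∂μ) ^ s * (∫⁻ z, g z ^ q ∂μ) ^ (q⁻¹ - s) *
        (∫⁻ z, κ z ∂μ) ^ (1 - q⁻¹) := by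
  have hq0 : q ≠ 0 := by positivity
  have hq1 : 0 ≤ 1 - q⁻¹ := sub_nonneg.2 (inv_le_one_of_one_le₀ hq)
  have holder := ENNReal.lintegral_prod_norm_pow_le (μ := μ) (Finset.univ : Finset (Fin 3))
    (f := ![fun z => g z ^ q * κ z, fun z => g z ^ q, κ]) (p := ![s, q⁻¹ - s, 1 - q⁻¹])
    (by simpa [Fin.forall_fin_succ] using
      ⟨(hg.pow_const q).mul hκ, hg.pow_const q, hκ⟩)
    (by simp [Fin.sum_univ_three])
    (by simpa [Fin.forall_fin_succ] using ⟨hs, hsq, inv_le_one_of_one_le₀ hq⟩)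
  simp only [Fin.prod_univ_three, Matrix.cons_val_zero, Matrix.cons_val_one,
    Matrix.cons_val] at holder
  refine le_of_eq_of_le (lintegral_congr fun z => ?_) holder
  have hgz : (g z ^ q) ^ s * (g z ^ q) ^ (q⁻¹ - s) = g z := by
    rw [← ENNReal.rpow_add_of_nonneg _ _ hs (by linarith), add_sub_cancel,
      ENNReal.rpow_rpow_inv hq0]
  rw [ENNReal.mul_rpow_of_nonneg _ _ hs, ENNReal.rpow_add_of_nonneg _ _ hq1 hs]
  nth_rewrite 1 [← hgz]
  ring

theorem lintegral_lintegral_mul_le [SFinite μ] {f : X → ℝ≥0∞} (hf : AEMeasurable f μ)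
    {κ : X → X → ℝ≥0∞} (hκ : Measurable (Function.uncurry κ)) {N : ℝ≥0∞}
    (hcol : ∀ᵐ z ∂μ, ∫⁻ x, κ x z ∂μ ≤ N) :
    ∫⁻ x, ∫⁻ z, f z * κ x z ∂μ ∂μ ≤ (∫⁻ z, f z ∂μ) * N := by
  rw [lintegral_lintegral_swap (hf.comp_snd.mul hκ.aemeasurable)]
  calc ∫⁻ z, ∫⁻ x, f z * κ x z ∂μ ∂μ = ∫⁻ z, f z * ∫⁻ x, κ x z ∂μ ∂μ :=
        lintegral_congr fun z => lintegral_const_mul _ hκ.of_uncurry_right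
    _ ≤ ∫⁻ z, f z * N ∂μ := lintegral_mono_ae <| hcol.mono fun z hz => by gcongr
    _ = (∫⁻ z, f z ∂μ) * N := lintegral_mul_const'' _ hf

theorem lintegral_rpow_lintegral_mul_rpow_le [SFinite μ] {g : X → ℝ≥0∞} (hg : AEMeasurable g μ)
    {κ : X → X → ℝ≥0∞} (hκ : Measurable (Function.uncurry κ)) {N : ℝ≥0∞}
    (hrow : ∀ᵐ x ∂μ, ∫⁻ z, κ x z ∂μ ≤ N) (hcol : ∀ᵐ z ∂μ, ∫⁻ x, κ x z ∂μ ≤ N)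
    {q s : ℝ} (hq : 1 ≤ q) (hs : 0 < s) (hsq : s ≤ q⁻¹) :
    (∫⁻ x, (∫⁻ z, g z * κ x z ^ (1 - q⁻¹ + s) ∂μ) ^ s⁻¹ ∂μ) ^ s ≤
      N ^ (1 - q⁻¹ + s) * (∫⁻ z, g z ^ q ∂μ) ^ q⁻¹ := by
  have hq1 : 0 ≤ 1 - q⁻¹ := sub_nonneg.2 (inv_le_one_of_one_le₀ hq)
  set A := ∫⁻ z, g z ^ q ∂μ
  set B := A ^ (q⁻¹ - s) * N ^ (1 - q⁻¹) with hB
  have hrow' : ∀ᵐ x ∂μ, (∫⁻ z, g z * κ x z ^ (1 - q⁻¹ + s) ∂μ) ^ s⁻¹ ≤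
      (∫⁻ z, g z ^ q * κ x z ∂μ) * B ^ s⁻¹ := by
    filter_upwards [hrow] with x hx
    calc (∫⁻ z, g z * κ x z ^ (1 - q⁻¹ + s) ∂μ) ^ s⁻¹
        ≤ ((∫⁻ z, g z ^ q * κ x z ∂μ) ^ s * A ^ (q⁻¹ - s) * N ^ (1 - q⁻¹)) ^ s⁻¹ := by
          gcongr
          refine (lintegral_mul_rpow_le hg hκ.of_uncurry_left.aemeasurable hq hs.le hsq).trans ?_
          gcongr
      _ = (∫⁻ z, g z ^ q * κ x z ∂μ) * B ^ s⁻¹ := by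
          rw [mul_assoc, ENNReal.mul_rpow_of_nonneg _ _ (inv_pos.2 hs).le,
            ENNReal.rpow_rpow_inv hs.ne']
  have hmeas : AEMeasurable (fun x => ∫⁻ z, g z ^ q * κ x z ∂μ) μ :=
    ((hg.pow_const q).comp_snd.mul hκ.aemeasurable).lintegral_prod_right'
  have hA_split : A ^ q⁻¹ = A ^ s * A ^ (q⁻¹ - s) := by
    rw [← ENNReal.rpow_add_of_nonneg _ _ hs.le (sub_nonneg.2 hsq), add_sub_cancel]
  calc (∫⁻ x, (∫⁻ z, g z * κ x z ^ (1 - q⁻¹ + s) ∂μ) ^ s⁻¹ ∂μ) ^ s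
      ≤ (∫⁻ x, (∫⁻ z, g z ^ q * κ x z ∂μ) * B ^ s⁻¹ ∂μ) ^ s := by
        gcongr ?_ ^ s
        exact lintegral_mono_ae hrow'
    _ ≤ (A * N * B ^ s⁻¹) ^ s := by
        rw [lintegral_mul_const'' _ hmeas]
        gcongr
        exact lintegral_lintegral_mul_le (hg.pow_const q) hκ hcol
    _ = N ^ (1 - q⁻¹ + s) * A ^ q⁻¹ := by
        rw [ENNReal.mul_rpow_of_nonneg _ _ hs.le, ENNReal.mul_rpow_of_nonneg _ _ hs.le,
          ENNReal.rpow_inv_rpow hs.ne', ENNReal.rpow_add_of_nonneg _ _ hq1 hs.le, hA_split, hB]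
        ring

theorem eLpNorm_lintegral_mul_rpow_le [SFinite μ] {g : X → ℝ≥0∞} (hg : AEMeasurable g μ)
    {κ : X → X → ℝ≥0∞} (hκ : Measurable (Function.uncurry κ)) {N : ℝ≥0∞}
    (hrow : ∀ᵐ x ∂μ, ∫⁻ z, κ x z ∂μ ≤ N) (hcol : ∀ᵐ z ∂μ, ∫⁻ x, κ x z ∂μ ≤ N)
    {q : ℝ} (hq : 1 ≤ q) {p : ℝ≥0∞} (hqp : ENNReal.ofReal q ≤ p) :
    eLpNorm (fun x => ∫⁻ z, g z * κ x z ^ (1 - q⁻¹ + p.toReal⁻¹) ∂μ) p μ ≤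
      N ^ (1 - q⁻¹ + p.toReal⁻¹) * eLpNorm g (ENNReal.ofReal q) μ := by
  have hq0 : 0 < q := one_pos.trans_le hq
  have hgq : eLpNorm g (ENNReal.ofReal q) μ = (∫⁻ z, g z ^ q ∂μ) ^ q⁻¹ := by
    rw [eLpNorm_eq_lintegral_rpow_enorm_toReal (by simpa using hq0) ENNReal.ofReal_ne_top]
    simp [ENNReal.toReal_ofReal hq0.le]
  rw [hgq]
  rcases eq_or_ne p ⊤ with rfl | hp
  · rw [eLpNorm_exponent_top]
    refine eLpNormEssSup_le_of_ae_enorm_bound ?_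
    filter_upwards [hrow] with x hx
    rw [ENNReal.toReal_top, inv_zero, enorm_eq_self]
    refine (lintegral_mul_rpow_le hg hκ.of_uncurry_left.aemeasurable hq le_rfl
      (inv_pos.2 hq0).le).trans ?_
    rw [ENNReal.rpow_zero, one_mul, sub_zero, mul_comm, add_zero]
    gcongr
    exact sub_nonneg.2 (inv_le_one_of_one_le₀ hq)
  · have hqp' : q ≤ p.toReal := (ENNReal.ofReal_le_iff_le_toReal hp).1 hqp
    have hp0 : 0 < p.toReal := hq0.trans_le hqp'
    rw [eLpNorm_eq_lintegral_rpow_enorm_toReal (ENNReal.toReal_pos_iff.1 hp0).1.ne' hp, one_div]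
    simpa using lintegral_rpow_lintegral_mul_rpow_le hg hκ hrow hcol hq (inv_pos.2 hp0)
      (inv_anti₀ hq0 hqp')

end Schur

theorem enorm_integral_smul_le_eLpNorm {X G : Type*} [MeasurableSpace X] [NormedAddCommGroup G]
    [NormedSpace ℝ G] {μ : Measure X} {η : X → ℝ} (hη : Measurable η) (hη0 : ∀ x, 0 ≤ η x)
    {H : ℝ} (hηH : ∀ x, η x ≤ H) (hη1 : ∫ x, η x ∂μ = 1) {u : X → G}
    (hu : AEStronglyMeasurable u μ) {q : ℝ} (hq : 1 ≤ q) :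
    ‖∫ x, η x • u x ∂μ‖ₑ ≤ ENNReal.ofReal H ^ q⁻¹ * eLpNorm u (ENNReal.ofReal q) μ := by
  set ν := μ.withDensity fun x => ENNReal.ofReal (η x) with hν
  have hq0 : 0 < q := one_pos.trans_le hq
  have hprob : IsProbabilityMeasure ν := ⟨by
    rw [hν, withDensity_apply _ .univ, Measure.restrict_univ,
      ← ofReal_integral_eq_lintegral_ofReal (integrable_of_integral_eq_one hη1)
        (Eventually.of_forall hη0), hη1, ENNReal.ofReal_one]⟩
  have hνμ : ν ≤ ENNReal.ofReal H • μ := by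
    rw [← withDensity_const]
    exact withDensity_mono (Eventually.of_forall fun x => ENNReal.ofReal_le_ofReal (hηH x))
  calc ‖∫ x, η x • u x ∂μ‖ₑ ≤ ∫⁻ x, ‖η x • u x‖ₑ ∂μ := enorm_integral_le_lintegral_enorm _
    _ = eLpNorm u 1 ν := by
        rw [eLpNorm_one_eq_lintegral_enorm, hν, lintegral_withDensity_eq_lintegral_mul₀
          hη.ennreal_ofReal.aemeasurable hu.enorm]
        exact lintegral_congr fun x => by simp [enorm_smul, Real.enorm_of_nonneg (hη0 x)]
    _ ≤ eLpNorm u (ENNReal.ofReal q) ν :=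
        eLpNorm_le_eLpNorm_of_exponent_le (ENNReal.one_le_ofReal.2 hq)
          (hu.mono_ac (withDensity_absolutelyContinuous _ _))
    _ ≤ eLpNorm u (ENNReal.ofReal q) (ENNReal.ofReal H • μ) := eLpNorm_mono_measure u hνμ
    _ = ENNReal.ofReal H ^ q⁻¹ * eLpNorm u (ENNReal.ofReal q) μ := by
        rw [eLpNorm_smul_measure_of_ne_top ENNReal.ofReal_ne_top, smul_eq_mul]
        simp [hq0.le]

section RieszPotential

variable {E : Type*} [NormedAddCommGroup E] [MeasurableSpace E] [BorelSpace E]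

/-- The Riesz potential of order `β` of `g` with respect to the measure `μ`, i.e. the integral
operator with kernel `‖z - x‖ ^ (-β)`. It takes values in `ℝ≥0∞`, so that no integrability is
needed to make sense of it. -/
def rieszPotential (μ : Measure E) (β : ℝ) (g : E → ℝ≥0∞) (x : E) : ℝ≥0∞ :=
  ∫⁻ z, g z * ‖z - x‖ₑ ^ (-β) ∂μ

theorem eLpNorm_rieszPotential_le [SecondCountableTopology E] {μ : Measure E} [SFinite μ]
    {g : E → ℝ≥0∞} (hg : AEMeasurable g μ) {a : ℝ} {N : ℝ≥0∞}
    (hN : ∀ᵐ x ∂μ, ∫⁻ z, ‖z - x‖ₑ ^ (-a) ∂μ ≤ N) {q : ℝ} (hq : 1 ≤ q) {p : ℝ≥0∞}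
    (hqp : ENNReal.ofReal q ≤ p) :
    eLpNorm (rieszPotential μ (a * (1 - q⁻¹ + p.toReal⁻¹)) g) p μ ≤
      N ^ (1 - q⁻¹ + p.toReal⁻¹) * eLpNorm g (ENNReal.ofReal q) μ := by
  have hκ : Measurable (Function.uncurry fun x z : E => ‖z - x‖ₑ ^ (-a)) := by
    unfold Function.uncurry
    fun_prop
  have hcol : ∀ᵐ z ∂μ, ∫⁻ x, ‖z - x‖ₑ ^ (-a) ∂μ ≤ N :=
    hN.mono fun z hz => by simpa only [enorm_sub_rev z] using hz
  unfold rieszPotential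
  simpa only [← neg_mul, ENNReal.rpow_mul] using
    eLpNorm_lintegral_mul_rpow_le hg hκ hN hcol hq hqp

theorem exists_lintegral_enorm_sub_rpow_neg_le [NormedSpace ℝ E] [FiniteDimensional ℝ E]
    [Nontrivial E] (μ : Measure E) [μ.IsAddHaarMeasure] {a : ℝ} (ha : a < Module.finrank ℝ E)
    (R : ℝ) :
    ∃ N : ℝ≥0, ∀ x : E, ∀ s ⊆ Metric.closedBall x R, ∫⁻ z in s, ‖z - x‖ₑ ^ (-a) ∂μ ≤ N := by
  set B := Metric.ball (0 : E) (R + 1)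
  have hint : IntegrableOn (fun z : E => ‖z‖ ^ (-a)) B μ :=
    integrableOn_ball_of_norm_le_rpow (C := 1) Module.finrank_pos ha
      (Eventually.of_forall fun z => by
        simp [abs_of_nonneg (Real.rpow_nonneg (norm_nonneg z) _)])
      (measurable_norm.pow_const _).aestronglyMeasurable
  have hfin : ∫⁻ z in B, ‖z‖ₑ ^ (-a) ∂μ ≠ ⊤ := by
    refine ne_of_eq_of_ne (lintegral_congr_ae (ae_restrict_of_ae ?_)) hint.2.ne
    filter_upwards [Measure.ae_ne μ (0 : E)] with z hz
    rw [Real.enorm_of_nonneg (by positivity), ← ENNReal.ofReal_rpow_of_pos (norm_pos_iff.2 hz),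
      ofReal_norm]
  refine ⟨(∫⁻ z in B, ‖z‖ₑ ^ (-a) ∂μ).toNNReal, fun x s hs => ?_⟩
  rw [ENNReal.coe_toNNReal hfin]
  calc ∫⁻ z in s, ‖z - x‖ₑ ^ (-a) ∂μ ≤ ∫⁻ z in Metric.ball x (R + 1), ‖z - x‖ₑ ^ (-a) ∂μ :=
        lintegral_mono_set (hs.trans (Metric.closedBall_subset_ball (lt_add_one R)))
    _ = ∫⁻ z, B.indicator (fun z => ‖z‖ₑ ^ (-a)) (z - x) ∂μ := by
        rw [← lintegral_indicator Metric.isOpen_ball.measurableSet]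
        exact lintegral_congr fun z => by simp [B, indicator, dist_eq_norm]
    _ = ∫⁻ z in B, ‖z‖ₑ ^ (-a) ∂μ := by
        rw [lintegral_sub_right_eq_self (fun z => B.indicator (fun z => ‖z‖ₑ ^ (-a)) z) x,
          lintegral_indicator Metric.isOpen_ball.measurableSet]

end RieszPotential

section HomothetyKernel

variable {E : Type*} [NormedAddCommGroup E] [NormedSpace ℝ E]

theorem exists_contDiff_le_two_div_measure_integral_eq_one [FiniteDimensional ℝ E]
    [MeasurableSpace E] [BorelSpace E] (μ : Measure E) [IsFiniteMeasureOnCompacts μ]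
    [μ.InnerRegularCompactLTTop] {Ω : Set E} (hΩo : IsOpen Ω) (hΩ0 : μ Ω ≠ 0)
    (hΩ : μ Ω ≠ ⊤) :
    ∃ η : E → ℝ, ContDiff ℝ (⊤ : ℕ∞) η ∧ HasCompactSupport η ∧ tsupport η ⊆ Ω ∧
      (∀ x, 0 ≤ η x) ∧ (∀ x, η x ≤ 2 / μ.real Ω) ∧ ∫ x, η x ∂μ = 1 := by
  obtain ⟨K, hKΩ, hK, hKμ⟩ := hΩo.exists_lt_isCompact (ENNReal.half_lt_self hΩ0 hΩ)
  obtain ⟨L, hL, hKL, hLΩ⟩ := exists_compact_between hK hΩo hKΩ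
  obtain ⟨f, hf, hf01, hfL, hf1⟩ := exists_contMDiff_support_eq_eq_one_iff
    (modelWithCornersSelf ℝ E) (n := (⊤ : ℕ∞)) isOpen_interior hK.isClosed hKL
  have hfsupp : tsupport f ⊆ L := by
    rw [tsupport, hfL]
    exact closure_minimal interior_subset hL.isClosed
  have hfc : HasCompactSupport f :=
    HasCompactSupport.of_support_subset_isCompact hL ((subset_tsupport f).trans hfsupp)
  have hf0 : ∀ x, 0 ≤ f x := fun x => (hf01 (mem_range_self x)).1
  have hmass : μ.real Ω / 2 ≤ ∫ x, f x ∂μ := calc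
    μ.real Ω / 2 ≤ μ.real K := by
      simpa [measureReal_def] using (ENNReal.toReal_lt_toReal (by finiteness)
        hK.measure_lt_top.ne).2 hKμ |>.le
    _ = ∫ x in K, f x ∂μ := by
      rw [setIntegral_congr_fun hK.measurableSet (g := fun _ => (1 : ℝ)) fun x hx => (hf1 x).1 hx]
      simp
    _ ≤ ∫ x, f x ∂μ :=
      setIntegral_le_integral (hf.contDiff.continuous.integrable_of_hasCompactSupport hfc)
        (Eventually.of_forall hf0)
  have hΩpos : 0 < μ.real Ω := ENNReal.toReal_pos hΩ0 hΩ
  have hpos : 0 < ∫ x, f x ∂μ := (half_pos hΩpos).trans_le hmass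
  refine ⟨fun x => (∫ x, f x ∂μ)⁻¹ * f x, contDiff_const.mul hf.contDiff, hfc.mul_left,
    tsupport_mul_subset_right.trans (hfsupp.trans hLΩ),
    fun x => mul_nonneg (inv_pos.2 hpos).le (hf0 x), fun x => ?_, ?_⟩
  · calc (∫ x, f x ∂μ)⁻¹ * f x ≤ (μ.real Ω / 2)⁻¹ * 1 := by
          gcongr
          · exact hf0 x
          · exact (hf01 (mem_range_self x)).2
      _ = 2 / μ.real Ω := by rw [mul_one, inv_div]
  · rw [integral_const_mul, inv_mul_cancel₀ hpos.ne']

/-- The weight `η`, transported by the homothety `y ↦ x + t • (y - x)` and normalised to keep its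
mass. As `t` decreases from `1` to `0` it moves from `η` to the Dirac mass at `x`. -/
def homothetyKernel (η : E → ℝ) (x : E) (t : ℝ) (z : E) : ℝ :=
  t⁻¹ ^ Module.finrank ℝ E * η (x + t⁻¹ • (z - x))

/-- The derivative of `homothetyKernel η x t z` with respect to `t`. -/
def homothetyKernelDeriv (η : E → ℝ) (x : E) (t : ℝ) (z : E) : ℝ :=
  -(Module.finrank ℝ E * t⁻¹ ^ (Module.finrank ℝ E + 1) * η (x + t⁻¹ • (z - x)) +
    t⁻¹ ^ (Module.finrank ℝ E + 2) * fderiv ℝ η (x + t⁻¹ • (z - x)) (z - x))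

variable {η : E → ℝ}

theorem contDiff_homothetyKernel {n : WithTop ℕ∞} (hη : ContDiff ℝ n η) (x : E) (t : ℝ) :
    ContDiff ℝ n (homothetyKernel η x t) := by
  unfold homothetyKernel
  fun_prop

@[simp]
theorem homothetyKernel_one (x : E) : homothetyKernel η x 1 = η := by
  ext z
  simp [homothetyKernel]

theorem support_homothetyKernel_subset (η : E → ℝ) (x : E) {t : ℝ} (ht : 0 < t) :
    Function.support (homothetyKernel η x t) ⊆ (fun y => x + t • (y - x)) '' tsupport η := by
  intro z hz
  refine ⟨x + t⁻¹ • (z - x), subset_tsupport η fun h => hz ?_, ?_⟩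
  · rw [homothetyKernel, h, mul_zero]
  · simp [smul_smul, ht.ne']

theorem tsupport_homothetyKernel_subset (hηc : HasCompactSupport η) (x : E) {t : ℝ} (ht : 0 < t) :
    tsupport (homothetyKernel η x t) ⊆ (fun y => x + t • (y - x)) '' tsupport η :=
  closure_minimal (support_homothetyKernel_subset η x ht)
    (hηc.isCompact.image (by fun_prop)).isClosed

theorem hasCompactSupport_homothetyKernel (hηc : HasCompactSupport η) (x : E) {t : ℝ}
    (ht : 0 < t) : HasCompactSupport (homothetyKernel η x t) :=
  HasCompactSupport.of_support_subset_isCompact (hηc.isCompact.image (by fun_prop))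
    (support_homothetyKernel_subset η x ht)

theorem tsupport_homothetyKernel_subset_of_convex {Ω : Set E} (hΩ : Convex ℝ Ω)
    (hηc : HasCompactSupport η) (hηΩ : tsupport η ⊆ Ω) {x : E} (hx : x ∈ Ω) {t : ℝ}
    (ht : t ∈ Ioc (0 : ℝ) 1) : tsupport (homothetyKernel η x t) ⊆ Ω := by
  refine (tsupport_homothetyKernel_subset hηc x ht.1).trans ?_
  rintro _ ⟨y, hy, rfl⟩
  exact hΩ.add_smul_sub_mem hx (hηΩ hy) ⟨ht.1.le, ht.2⟩

theorem norm_sub_le_of_homothetyKernel_ne_zero {x : E} {ρ : ℝ}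
    (hηx : tsupport η ⊆ Metric.closedBall x ρ) {t : ℝ} (ht : 0 < t) {z : E}
    (hz : homothetyKernel η x t z ≠ 0) : ‖z - x‖ ≤ t * ρ := by
  obtain ⟨y, hy, rfl⟩ := support_homothetyKernel_subset η x ht hz
  have hyx : ‖y - x‖ ≤ ρ := by simpa [dist_eq_norm] using hηx hy
  simpa [norm_smul, abs_of_pos ht] using mul_le_mul_of_nonneg_left hyx ht.le

theorem norm_homothetyKernel_le {H : ℝ} (hηH : ∀ y, ‖η y‖ ≤ H) (x : E) {t : ℝ} (ht : 0 < t)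
    (z : E) : ‖homothetyKernel η x t z‖ ≤ t⁻¹ ^ Module.finrank ℝ E * H := by
  rw [homothetyKernel, norm_mul, Real.norm_of_nonneg (by positivity)]
  gcongr
  exact hηH _

theorem hasDerivAt_homothetyKernel (hη : Differentiable ℝ η) (x z : E) {t : ℝ} (ht : t ≠ 0) :
    HasDerivAt (fun s => homothetyKernel η x s z) (homothetyKernelDeriv η x t z) t := by
  have hinv : HasDerivAt (fun s : ℝ => s⁻¹) (-(t ^ 2)⁻¹) t := hasDerivAt_inv ht
  have hpoint : HasDerivAt (fun s : ℝ => x + s⁻¹ • (z - x)) (-(t ^ 2)⁻¹ • (z - x)) t :=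
    (hinv.smul_const (z - x)).const_add x
  refine ((hinv.pow (Module.finrank ℝ E)).mul
    ((hη (x + t⁻¹ • (z - x))).hasFDerivAt.comp_hasDerivAt t hpoint)).congr_deriv ?_
  simp only [homothetyKernelDeriv, map_smul, smul_eq_mul, Function.comp_apply, Pi.pow_apply]
  rcases Module.finrank ℝ E with _ | n
  · simp
  · push_cast
    ring

theorem hasFDerivAt_homothetyKernel (hη : Differentiable ℝ η) (x : E) (t : ℝ) (z : E) :
    HasFDerivAt (homothetyKernel η x t)
      (t⁻¹ ^ (Module.finrank ℝ E + 1) • fderiv ℝ η (x + t⁻¹ • (z - x))) z := by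
  have hpoint : HasFDerivAt (fun z : E => x + t⁻¹ • (z - x)) (t⁻¹ • ContinuousLinearMap.id ℝ E) z :=
    (((hasFDerivAt_id z).sub_const x).const_smul t⁻¹).const_add x
  refine (((hη _).hasFDerivAt.comp z hpoint).const_mul (t⁻¹ ^ Module.finrank ℝ E)).congr_fderiv ?_
  ext v
  simp [pow_succ, mul_assoc]

theorem continuousOn_homothetyKernelDeriv (hη : ContDiff ℝ 1 η) (x : E) :
    ContinuousOn (Function.uncurry (homothetyKernelDeriv η x)) (Ioi 0 ×ˢ univ) := by
  have hη0 : Continuous η := hη.continuous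
  have hinv : ContinuousOn (fun y : ℝ × E => y.1⁻¹) (Ioi 0 ×ˢ univ) :=
    continuousOn_fst.inv₀ fun y hy => (mem_Ioi.1 hy.1).ne'
  unfold Function.uncurry homothetyKernelDeriv
  fun_prop

section Integral

variable [MeasurableSpace E] [BorelSpace E] [FiniteDimensional ℝ E] {μ : Measure E}

theorem integral_homothetyKernel [μ.IsAddHaarMeasure] (η : E → ℝ) (x : E) {t : ℝ} (ht : 0 < t) :
    ∫ z, homothetyKernel η x t z ∂μ = ∫ y, η y ∂μ := by
  unfold homothetyKernel
  rw [integral_const_mul, integral_sub_right_eq_self (fun z => η (x + t⁻¹ • z)) x,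
    Measure.integral_comp_smul μ (fun z => η (x + z)), integral_add_left_eq_self η x,
    abs_of_pos (by positivity), smul_eq_mul, ← mul_assoc, mul_inv_cancel₀ (by positivity), one_mul]

variable {G : Type*} [NormedAddCommGroup G] [NormedSpace ℝ G] {u : E → G}

theorem hasDerivAt_integral_homothetyKernel_smul {Ω : Set E} (hΩm : MeasurableSet Ω)
    (hΩb : Bornology.IsBounded Ω) (hη : ContDiff ℝ 1 η) (hu : IntegrableOn u Ω μ) (x : E) {t : ℝ}
    (ht : 0 < t) :
    HasDerivAt (fun s => ∫ z in Ω, homothetyKernel η x s z • u z ∂μ)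
      (∫ z in Ω, homothetyKernelDeriv η x t z • u z ∂μ) t := by
  have hcpt : IsCompact (closure Ω) := hΩb.isCompact_closure
  have hk : ∀ s, Continuous (homothetyKernel η x s) :=
    fun s => (contDiff_homothetyKernel hη x s).continuous
  have hcont := continuousOn_homothetyKernelDeriv hη x
  have hk' : Continuous (homothetyKernelDeriv η x t) :=
    continuousOn_univ.1 (hcont.uncurry_left t ht)
  obtain ⟨B, hB⟩ := (isCompact_Icc.prod hcpt).exists_bound_of_continuousOn
    (hcont.mono (prod_mono (fun s (hs : s ∈ Icc (t / 2) (2 * t)) => (half_pos ht).trans_le hs.1)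
      (subset_univ _)))
  refine (hasDerivAt_integral_of_dominated_loc_of_deriv_le (s := Icc (t / 2) (2 * t))
    (F' := fun s z => homothetyKernelDeriv η x s z • u z) (bound := fun z => B * ‖u z‖)
    (Icc_mem_nhds (half_lt_self ht) (by linarith))
    (Eventually.of_forall fun s => (hk s).aestronglyMeasurable.smul hu.1)
    (hu.continuousOn_smul_of_subset (hk t).continuousOn hcpt hΩm subset_closure)
    (hk'.aestronglyMeasurable.smul hu.1) ?_ (hu.norm.const_mul B) ?_).2
  · filter_upwards [ae_restrict_mem hΩm] with z hz s hs
    rw [norm_smul]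
    gcongr
    exact hB (s, z) ⟨hs, subset_closure hz⟩
  · exact Eventually.of_forall fun z s hs => (hasDerivAt_homothetyKernel
      (hη.differentiable one_ne_zero) x z ((half_pos ht).trans_le hs.1).ne').smul_const (u z)

theorem ae_tendsto_integral_homothetyKernel_smul [μ.IsAddHaarMeasure] [CompleteSpace G]
    (hη : Continuous η) (hηc : HasCompactSupport η) (hη1 : ∫ y, η y ∂μ = 1)
    (hu : LocallyIntegrable u μ) :
    ∀ᵐ x ∂μ, Tendsto (fun t => ∫ z, homothetyKernel η x t z • u z ∂μ) (𝓝[>] 0) (𝓝 (u x)) := by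
  obtain ⟨H, hH⟩ := hη.bounded_above_of_compact_support hηc
  filter_upwards [IsUnifLocDoublingMeasure.ae_tendsto_average_norm_sub μ hu 0] with x hx
  obtain ⟨ρ, hρ, hηρ⟩ := hηc.isCompact.isBounded.subset_closedBall_lt 0 x
  have hρ_tendsto : Tendsto (fun t : ℝ => t * ρ) (𝓝[>] 0) (𝓝[>] 0) := by
    refine tendsto_nhdsWithin_iff.2 ⟨?_, ?_⟩
    · simpa using (tendsto_id.mul_const ρ).mono_left (nhdsWithin_le_nhds (a := (0 : ℝ)))
    · filter_upwards [self_mem_nhdsWithin] with t ht using mul_pos ht hρ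
  have haverage := hx (fun _ => x) (fun t : ℝ => t * ρ) hρ_tendsto
    (Eventually.of_forall fun t => by simp)
  refine tendsto_integral_smul_of_tendsto_average_norm_sub
    (ρ ^ Module.finrank ℝ E * μ.real (Metric.closedBall 0 1) * H) haverage
    (Eventually.of_forall fun t => (hu.integrableOn_isCompact (isCompact_closedBall _ _)))
    (tendsto_const_nhds.congr' ?_) ?_ ?_
  all_goals filter_upwards [self_mem_nhdsWithin] with t (ht : 0 < t)
  · rw [integral_homothetyKernel η x ht, hη1]
  · intro z hz
    simpa [dist_eq_norm] using norm_sub_le_of_homothetyKernel_ne_zero hηρ ht hz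
  · intro z
    refine (norm_homothetyKernel_le hH x ht z).trans_eq ?_
    have hball : μ.real (Metric.closedBall (0 : E) 1) ≠ 0 :=
      (ENNReal.toReal_pos (Metric.measure_closedBall_pos μ 0 one_pos).ne'
        measure_closedBall_lt_top.ne).ne'
    rw [Measure.addHaar_real_closedBall' μ x (mul_pos ht hρ).le, mul_pow, inv_pow]
    field_simp

end Integral

end HomothetyKernel

section HomothetyFlux

variable {d : ℕ} {η : Euc d → ℝ} {x : Euc d} {t : ℝ}

theorem pd_ofReal {f : Euc d → ℝ} {f' : Euc d →L[ℝ] ℝ} {z : Euc d} (hf : HasFDerivAt f f' z)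
    (i : Fin d) : pd i (fun y => (f y : ℂ)) z = (f' (EuclideanSpace.single i 1) : ℝ) := by
  have hf' : HasFDerivAt (fun y => (f y : ℂ)) (Complex.ofRealCLM.comp f') z :=
    Complex.ofRealCLM.hasFDerivAt.comp z hf
  rw [pd, hf'.fderiv]
  rfl

/-- The `i`-th component of the flux of the mass distribution `homothetyKernel η x t`, whose
velocity at `z` is `t⁻¹ • (z - x)` as `t` varies. -/
def homothetyFlux (η : Euc d → ℝ) (x : Euc d) (t : ℝ) (i : Fin d) (z : Euc d) : ℝ :=
  t⁻¹ * (z i - x i) * homothetyKernel η x t z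

theorem contDiff_homothetyFlux {n : WithTop ℕ∞} (hη : ContDiff ℝ n η) (i : Fin d) :
    ContDiff ℝ n (homothetyFlux η x t i) := by
  have := contDiff_homothetyKernel hη x t
  unfold homothetyFlux
  fun_prop

theorem hasFDerivAt_homothetyFlux (hη : Differentiable ℝ η) (i : Fin d) (z : Euc d) :
    HasFDerivAt (homothetyFlux η x t i)
      ((t⁻¹ * (z i - x i)) • t⁻¹ ^ (d + 1) • fderiv ℝ η (x + t⁻¹ • (z - x)) +
        homothetyKernel η x t z • t⁻¹ • EuclideanSpace.proj i) z := by
  have hcoord : HasFDerivAt (fun z : Euc d => t⁻¹ * (z i - x i))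
      (t⁻¹ • (EuclideanSpace.proj i : Euc d →L[ℝ] ℝ)) z :=
    ((EuclideanSpace.proj i : Euc d →L[ℝ] ℝ).hasFDerivAt.sub_const (x i)).const_mul t⁻¹
  exact (hcoord.mul (hasFDerivAt_homothetyKernel hη x t z)).congr_fderiv
    (by rw [finrank_euclideanSpace_fin])

theorem sum_pd_homothetyFlux (hη : Differentiable ℝ η) (z : Euc d) :
    ∑ i, pd i (fun y => (homothetyFlux η x t i y : ℂ)) z =
      -(homothetyKernelDeriv η x t z : ℂ) := by
  have hz : z - x = ∑ i, (z i - x i) • EuclideanSpace.single i (1 : ℝ) := by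
    ext j
    simp [Finset.sum_apply, Pi.single_apply]
  have hL (L : Euc d →L[ℝ] ℝ) :
      L (z - x) = ∑ i, (z i - x i) * L (EuclideanSpace.single i 1) := by
    conv_lhs => rw [hz]
    simp
  have hproj (i : Fin d) :
      (EuclideanSpace.proj i : Euc d →L[ℝ] ℝ) (EuclideanSpace.single i 1) = 1 := by simp
  simp_rw [pd_ofReal (hasFDerivAt_homothetyFlux hη _ z)]
  rw [← Complex.ofReal_sum, ← Complex.ofReal_neg]
  congr 1
  simp only [homothetyKernelDeriv, homothetyKernel, hL, finrank_euclideanSpace_fin, neg_neg,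
    add_apply, smul_apply, hproj, smul_eq_mul, Finset.sum_add_distrib, Finset.sum_const,
    Finset.card_univ, Fintype.card_fin, nsmul_eq_mul, Finset.mul_sum]
  rw [add_comm]
  congr 1
  · ring
  · exact Finset.sum_congr rfl fun i _ => by ring

theorem isTestFun_homothetyFlux {Ω : Set (Euc d)} (hΩ : Convex ℝ Ω)
    (hη : ContDiff ℝ (⊤ : ℕ∞) η) (hηc : HasCompactSupport η) (hηΩ : tsupport η ⊆ Ω) (hx : x ∈ Ω)
    (ht : t ∈ Ioc (0 : ℝ) 1) (i : Fin d) :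
    IsTestFun Ω fun z => (homothetyFlux η x t i z : ℂ) := by
  have hsupp : Function.support (fun z => (homothetyFlux η x t i z : ℂ)) ⊆
      Function.support (homothetyKernel η x t) :=
    fun z hz h0 => hz (by simp [homothetyFlux, h0])
  refine ⟨Complex.ofRealCLM.contDiff.comp (contDiff_homothetyFlux hη i),
    (hasCompactSupport_homothetyKernel hηc x ht.1).mono hsupp, ?_⟩
  exact (closure_mono hsupp).trans (tsupport_homothetyKernel_subset_of_convex hΩ hηc hηΩ hx ht)

/-- Differentiating the mean of `u` against the moving weight and integrating the continuity
equation by parts only leaves the weak derivatives of `u`. -/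
theorem hasDerivAt_integral_homothetyKernel_smul_of_isWeakDeriv {Ω : Set (Euc d)}
    (hΩo : IsOpen Ω) (hΩb : Bornology.IsBounded Ω) (hΩ : Convex ℝ Ω)
    (hη : ContDiff ℝ (⊤ : ℕ∞) η) (hηc : HasCompactSupport η) (hηΩ : tsupport η ⊆ Ω) (hx : x ∈ Ω)
    (ht : t ∈ Ioc (0 : ℝ) 1) {u : Euc d → ℂ} {du : Fin d → Euc d → ℂ} (hu : IntegrableOn u Ω)
    (hw : ∀ i, IsWeakDeriv Ω i u (du i)) :
    HasDerivAt (fun s => ∫ z in Ω, homothetyKernel η x s z • u z)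
      (∑ i, ∫ z in Ω, du i z * (homothetyFlux η x t i z : ℂ)) t := by
  have hη1 : ContDiff ℝ 1 η := hη.of_le (by exact_mod_cast le_top)
  refine (hasDerivAt_integral_homothetyKernel_smul hΩo.measurableSet hΩb hη1 hu x ht.1).congr_deriv
    ?_
  have htest := isTestFun_homothetyFlux hΩ hη hηc hηΩ hx ht
  have hint (i) : IntegrableOn
      (fun z => u z * pd i (fun y => (homothetyFlux η x t i y : ℂ)) z) Ω := by
    have hpd : Continuous (pd i fun y => (homothetyFlux η x t i y : ℂ)) :=
      ((htest i).1.continuous_fderiv (by simp)).clm_apply continuous_const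
    exact hu.mul_continuousOn_of_subset hpd.continuousOn hΩo.measurableSet hΩb.isCompact_closure
      subset_closure
  have hparts (i) : ∫ z in Ω, du i z * (homothetyFlux η x t i z : ℂ) =
      -∫ z in Ω, u z * pd i (fun y => (homothetyFlux η x t i y : ℂ)) z := by
    rw [hw i _ (htest i), neg_neg]
  simp_rw [hparts]
  rw [Finset.sum_neg_distrib, ← integral_finsetSum _ fun i _ => hint i, ← integral_neg]
  simp_rw [← Finset.mul_sum, sum_pd_homothetyFlux (hη1.differentiable one_ne_zero), mul_neg,
    neg_neg, Complex.real_smul, mul_comm]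

theorem enorm_homothetyFlux_le {R H β : ℝ} (hβ : 0 ≤ β) (hηH : ∀ y, ‖η y‖ ≤ H)
    (hηx : tsupport η ⊆ Metric.closedBall x R) (ht : 0 < t) (i : Fin d) {z : Euc d} (hz : z ≠ x) :
    ‖homothetyFlux η x t i z‖ₑ ≤
      ENNReal.ofReal (t ^ (β - d) * (R ^ (β + 1) * H)) * ‖z - x‖ₑ ^ (-β) := by
  have hH : 0 ≤ H := (norm_nonneg _).trans (hηH x)
  by_cases hk : homothetyKernel η x t z = 0
  · simp [homothetyFlux, hk]
  have hzx : 0 < ‖z - x‖ := norm_pos_iff.2 (sub_ne_zero.2 hz)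
  have hztR : ‖z - x‖ ≤ t * R := norm_sub_le_of_homothetyKernel_ne_zero hηx ht hk
  have hR : 0 < R := pos_of_mul_pos_right (hzx.trans_le hztR) ht.le
  have hcoord : ‖z i - x i‖ ≤ ‖z - x‖ := by simpa using PiLp.norm_apply_le (z - x) i
  have hkernel : ‖homothetyKernel η x t z‖ ≤ t⁻¹ ^ d * H := by
    simpa using norm_homothetyKernel_le hηH x ht z
  have hratio : 1 ≤ (t * R / ‖z - x‖) ^ β :=
    Real.one_le_rpow ((one_le_div hzx).2 hztR) hβ
  rw [← ofReal_norm, ← ofReal_norm (z - x), ENNReal.ofReal_rpow_of_pos hzx,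
    ← ENNReal.ofReal_mul (by positivity)]
  refine ENNReal.ofReal_le_ofReal ?_
  calc ‖homothetyFlux η x t i z‖ = t⁻¹ * ‖z i - x i‖ * ‖homothetyKernel η x t z‖ := by
        rw [homothetyFlux, norm_mul, norm_mul, Real.norm_of_nonneg (inv_pos.2 ht).le]
    _ ≤ t⁻¹ * (t * R) * (t⁻¹ ^ d * H) := by
        gcongr
        exact hcoord.trans hztR
    _ ≤ t⁻¹ * (t * R) * (t⁻¹ ^ d * H) * (t * R / ‖z - x‖) ^ β :=
        le_mul_of_one_le_right (by positivity) hratio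
    _ = t ^ (β - d) * (R ^ (β + 1) * H) * ‖z - x‖ ^ (-β) := by
        rw [Real.div_rpow (by positivity) hzx.le, Real.mul_rpow ht.le hR.le, Real.rpow_sub ht,
          Real.rpow_natCast, Real.rpow_add hR, Real.rpow_neg hzx.le, Real.rpow_one, inv_pow]
        field_simp

theorem enorm_sum_integral_mul_homothetyFlux_le {Ω : Set (Euc d)} {R H β : ℝ} (hβ : 0 ≤ β)
    (hηH : ∀ y, ‖η y‖ ≤ H) (hηx : tsupport η ⊆ Metric.closedBall x R) (ht : 0 < t)
    {g : Fin d → Euc d → ℂ} (hg : ∀ i, AEStronglyMeasurable (g i) (volume.restrict Ω)) :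
    ‖∑ i, ∫ z in Ω, g i z * (homothetyFlux η x t i z : ℂ)‖ₑ ≤
      ENNReal.ofReal (t ^ (β - d) * (R ^ (β + 1) * H)) *
        rieszPotential (volume.restrict Ω) β (fun z => ∑ i, ‖g i z‖ₑ) x := by
  rcases d.eq_zero_or_pos with rfl | hd
  · simp
  have : Nonempty (Fin d) := ⟨⟨0, hd⟩⟩
  set c := ENNReal.ofReal (t ^ (β - d) * (R ^ (β + 1) * H))
  have hpoint (i) : ∀ᵐ z ∂volume.restrict Ω, ‖g i z * (homothetyFlux η x t i z : ℂ)‖ₑ ≤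
      c * (‖g i z‖ₑ * ‖z - x‖ₑ ^ (-β)) := by
    filter_upwards [ae_restrict_of_ae (Measure.ae_ne volume x)] with z hz
    rw [enorm_mul, mul_left_comm, ← ofReal_norm (homothetyFlux η x t i z : ℂ), Complex.norm_real,
      ofReal_norm]
    gcongr
    exact enorm_homothetyFlux_le hβ hηH hηx ht i hz
  have hmeas (i) : AEMeasurable (fun z => ‖g i z‖ₑ * ‖z - x‖ₑ ^ (-β)) (volume.restrict Ω) :=
    (hg i).enorm.mul (by fun_prop)
  calc ‖∑ i, ∫ z in Ω, g i z * (homothetyFlux η x t i z : ℂ)‖ₑ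
      ≤ ∑ i, ∫⁻ z in Ω, c * (‖g i z‖ₑ * ‖z - x‖ₑ ^ (-β)) :=
        (enorm_sum_le _ _).trans (Finset.sum_le_sum fun i _ =>
          (enorm_integral_le_lintegral_enorm _).trans (lintegral_mono_ae (hpoint i)))
    _ = c * rieszPotential (volume.restrict Ω) β (fun z => ∑ i, ‖g i z‖ₑ) x := by
        simp_rw [rieszPotential, Finset.sum_mul]
        rw [lintegral_finsetSum' _ fun i _ => hmeas i, Finset.mul_sum]
        exact Finset.sum_congr rfl fun i _ => lintegral_const_mul'' _ (hmeas i)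

end HomothetyFlux

section SobolevInequality

variable {d : ℕ} {Ω : Set (Euc d)}

theorem volume_real_pos_of_isOpen (hΩo : IsOpen Ω) (hΩb : Bornology.IsBounded Ω)
    (hne : Ω.Nonempty) : 0 < volume.real Ω :=
  ENNReal.toReal_pos (hΩo.measure_pos volume hne).ne' hΩb.measure_lt_top.ne

namespace W1Fun

variable {q : ℝ} (U : W1Fun d Ω q)

theorem integrableOn (hΩb : Bornology.IsBounded Ω) (hq : 1 ≤ q) : IntegrableOn U.u Ω := by
  have : IsFiniteMeasure (volume.restrict Ω) := ⟨by simpa using hΩb.measure_lt_top⟩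
  exact U.hu.integrable (by simpa using hq)

theorem integrableOn_du (hΩb : Bornology.IsBounded Ω) (hq : 1 ≤ q) (i : Fin d) :
    IntegrableOn (U.du i) Ω := by
  have : IsFiniteMeasure (volume.restrict Ω) := ⟨by simpa using hΩb.measure_lt_top⟩
  exact (U.hdu i).integrable (by simpa using hq)

theorem eLpNorm_rieszPotential_le_mul (hΩo : IsOpen Ω) (hq : 1 ≤ q) {p : ℝ≥0∞}
    (hqp : ENNReal.ofReal q ≤ p) {a : ℝ} {N : ℝ≥0∞}
    (hN : ∀ x ∈ Ω, ∫⁻ z in Ω, ‖z - x‖ₑ ^ (-a) ≤ N) {T : ℝ≥0∞}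
    (hdu : ∀ i, eLpNorm (U.du i) (ENNReal.ofReal q) (volume.restrict Ω) ≤ T) :
    eLpNorm (rieszPotential (volume.restrict Ω) (a * (1 - q⁻¹ + p.toReal⁻¹))
      fun z => ∑ i, ‖U.du i z‖ₑ) p (volume.restrict Ω) ≤
        N ^ (1 - q⁻¹ + p.toReal⁻¹) * (d * T) := by
  have hsum : eLpNorm (∑ i, fun z => ‖U.du i z‖ₑ) (ENNReal.ofReal q) (volume.restrict Ω) ≤
      d * T := by
    refine (eLpNorm_sum_le (fun i _ => (U.hdu i).1.enorm.aestronglyMeasurable)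
      (by simpa using hq)).trans ?_
    simpa using Finset.sum_le_card_nsmul Finset.univ _ T fun i _ => hdu i
  refine (eLpNorm_rieszPotential_le (Finset.aemeasurable_fun_sum _ fun i _ => (U.hdu i).1.enorm)
    ((ae_restrict_iff' hΩo.measurableSet).2 (Eventually.of_forall hN)) hq hqp).trans ?_
  gcongr
  simpa only [Finset.sum_fn] using hsum

theorem eLpNorm_sub_const_le_mul (hΩo : IsOpen Ω) (hq : 1 ≤ q) {p : ℝ≥0∞}
    (hqp : ENNReal.ofReal q ≤ p) {r a : ℝ} (hr : r = 1 - q⁻¹ + p.toReal⁻¹) {N : ℝ≥0}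
    (hN : ∀ x ∈ Ω, ∫⁻ z in Ω, ‖z - x‖ₑ ^ (-a) ≤ N) {T : ℝ≥0∞}
    (hdu : ∀ i, eLpNorm (U.du i) (ENNReal.ofReal q) (volume.restrict Ω) ≤ T) {c : ℝ} (hc : 0 ≤ c)
    {m : ℂ} (hum : ∀ᵐ x ∂volume.restrict Ω, ‖U.u x - m‖ₑ ≤ ENNReal.ofReal c *
      rieszPotential (volume.restrict Ω) (a * r) (fun z => ∑ i, ‖U.du i z‖ₑ) x) :
    eLpNorm (fun x => U.u x - m) p (volume.restrict Ω) ≤ ENNReal.ofReal (d * (c * N ^ r)) * T := by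
  have hr0 : 0 ≤ r :=
    hr ▸ add_nonneg (sub_nonneg.2 (inv_le_one_of_one_le₀ hq)) (inv_nonneg.2 ENNReal.toReal_nonneg)
  calc eLpNorm (fun x => U.u x - m) p (volume.restrict Ω)
      ≤ ENNReal.ofReal c * eLpNorm (rieszPotential (volume.restrict Ω) (a * r)
          fun z => ∑ i, ‖U.du i z‖ₑ) p (volume.restrict Ω) :=
        eLpNorm_le_mul_eLpNorm_of_ae_le_mul' hum p
    _ ≤ ENNReal.ofReal c * (N ^ r * (d * T)) := by
        gcongr
        exact hr ▸ U.eLpNorm_rieszPotential_le_mul hΩo hq hqp hN hdu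
    _ = ENNReal.ofReal (d * (c * N ^ r)) * T := by
        rw [ENNReal.ofReal_mul (by positivity), ENNReal.ofReal_mul hc, ENNReal.ofReal_natCast,
          ← ENNReal.ofReal_rpow_of_nonneg N.coe_nonneg hr0, ENNReal.ofReal_coe_nnreal]
        ring

end W1Fun

variable [NeZero d]

theorem diam_pos_of_isOpen (hΩo : IsOpen Ω) (hΩb : Bornology.IsBounded Ω) (hne : Ω.Nonempty) :
    0 < Metric.diam Ω := by
  obtain ⟨x, hx⟩ := hne
  exact Metric.diam_pos (infinite_of_mem_nhds x (hΩo.mem_nhds hx)).nontrivial hΩb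

theorem ae_enorm_sub_integral_smul_le_rieszPotential (hΩo : IsOpen Ω)
    (hΩb : Bornology.IsBounded Ω) (hΩ : Convex ℝ Ω) {η : Euc d → ℝ}
    (hη : ContDiff ℝ (⊤ : ℕ∞) η) (hηc : HasCompactSupport η) (hηΩ : tsupport η ⊆ Ω) {H : ℝ}
    (hηH : ∀ y, ‖η y‖ ≤ H) (hη1 : ∫ y, η y = 1) {R : ℝ} (hR : 0 < R)
    (hΩR : ∀ x ∈ Ω, Ω ⊆ Metric.closedBall x R) {β : ℝ} (hβ : d - 1 < β) {u : Euc d → ℂ}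
    {du : Fin d → Euc d → ℂ} (hu : IntegrableOn u Ω) (hdu : ∀ i, IntegrableOn (du i) Ω)
    (hw : ∀ i, IsWeakDeriv Ω i u (du i)) :
    ∀ᵐ x ∂volume.restrict Ω, ‖u x - ∫ z in Ω, η z • u z‖ₑ ≤
      ENNReal.ofReal (R ^ (β + 1) * H / (β + 1 - d)) *
        rieszPotential (volume.restrict Ω) β (fun z => ∑ i, ‖du i z‖ₑ) x := by
  have hd : (1 : ℝ) ≤ d := by exact_mod_cast NeZero.one_le
  have hα : 0 < β + 1 - d := by linarith
  have hH : 0 < H := by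
    by_contra! h
    have hη0 (y) : η y = 0 := norm_le_zero_iff.1 ((hηH y).trans h)
    simp [hη0] at hη1
  have hlim := ae_tendsto_integral_homothetyKernel_smul (μ := volume) hη.continuous hηc hη1
    (u := Ω.indicator u) ((integrable_indicator_iff hΩo.measurableSet).2 hu).locallyIntegrable
  filter_upwards [ae_restrict_of_ae hlim, ae_restrict_mem hΩo.measurableSet] with x hx hxΩ
  simp_rw [← indicator_smul, integral_indicator hΩo.measurableSet, indicator_of_mem hxΩ] at hx
  set G := rieszPotential (volume.restrict Ω) β (fun z => ∑ i, ‖du i z‖ₑ) x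
  rcases eq_or_ne G ⊤ with hG | hG
  · rw [hG, ENNReal.mul_top (ENNReal.ofReal_pos.2 (by positivity)).ne']
    exact le_top
  have hderiv : ∀ t ∈ Ioc (0 : ℝ) 1, ‖∑ i, ∫ z in Ω, du i z * (homothetyFlux η x t i z : ℂ)‖ ≤
      t ^ (β + 1 - d - 1) * (R ^ (β + 1) * H * G.toReal) := by
    intro t ht
    have ht0 : 0 < t := ht.1
    have hle := enorm_sum_integral_mul_homothetyFlux_le (β := β) (by linarith) hηH
      (hηΩ.trans (hΩR x hxΩ)) ht0 fun i => (hdu i).1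
    rw [← toReal_enorm, show β + 1 - d - 1 = β - d by ring]
    refine (ENNReal.toReal_mono (by finiteness) hle).trans_eq ?_
    rw [ENNReal.toReal_mul, ENNReal.toReal_ofReal (by positivity), mul_assoc]
  have hmain := norm_sub_le_of_norm_deriv_le_rpow hα
    (fun t ht => hasDerivAt_integral_homothetyKernel_smul_of_isWeakDeriv hΩo hΩb hΩ hη hηc hηΩ hxΩ
      ht hu hw) hderiv hx
  rw [homothetyKernel_one] at hmain
  rw [← ofReal_norm, ← ENNReal.ofReal_toReal hG, ← ENNReal.ofReal_mul (by positivity)]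
  exact ENNReal.ofReal_le_ofReal (hmain.trans_eq (by ring))

theorem exists_ae_enorm_sub_le_rieszPotential (hΩo : IsOpen Ω) (hΩb : Bornology.IsBounded Ω)
    (hΩ : Convex ℝ Ω) (hne : Ω.Nonempty) {β : ℝ} (hβ : d - 1 < β) {u : Euc d → ℂ}
    {du : Fin d → Euc d → ℂ} (hu : IntegrableOn u Ω) (hdu : ∀ i, IntegrableOn (du i) Ω)
    (hw : ∀ i, IsWeakDeriv Ω i u (du i)) :
    ∃ m : ℂ,
      (∀ q : ℝ, 1 ≤ q → ‖m‖ₑ ≤ ENNReal.ofReal (2 / volume.real Ω) ^ q⁻¹ *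
        eLpNorm u (ENNReal.ofReal q) (volume.restrict Ω)) ∧
      ∀ᵐ x ∂volume.restrict Ω, ‖u x - m‖ₑ ≤
        ENNReal.ofReal (Metric.diam Ω ^ (β + 1) * (2 / volume.real Ω) / (β + 1 - d)) *
          rieszPotential (volume.restrict Ω) β (fun z => ∑ i, ‖du i z‖ₑ) x := by
  obtain ⟨η, hη, hηc, hηΩ, hη0, hηH, hη1⟩ :=
    exists_contDiff_le_two_div_measure_integral_eq_one volume hΩo
      (hΩo.measure_pos volume hne).ne' hΩb.measure_lt_top.ne
  have hη1Ω : ∫ y in Ω, η y = 1 := by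
    rwa [setIntegral_eq_integral_of_forall_compl_eq_zero fun y hy =>
      image_eq_zero_of_notMem_tsupport fun h => hy (hηΩ h)]
  refine ⟨∫ z in Ω, η z • u z, fun q hq => enorm_integral_smul_le_eLpNorm
    hη.continuous.measurable hη0 hηH hη1Ω hu.1 hq, ?_⟩
  exact ae_enorm_sub_integral_smul_le_rieszPotential hΩo hΩb hΩ hη hηc hηΩ
    (fun y => (Real.norm_of_nonneg (hη0 y)).trans_le (hηH y)) hη1
    (diam_pos_of_isOpen hΩo hΩb hne)
    (fun x hx y hy => Metric.dist_le_diam_of_mem hΩb hy hx) hβ hu hdu hw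

namespace W1Fun

variable {q : ℝ} (U : W1Fun d Ω q)

theorem eLpNorm_le_mul (hΩo : IsOpen Ω) (hΩb : Bornology.IsBounded Ω) (hΩ : Convex ℝ Ω)
    (hne : Ω.Nonempty) (hq : 1 ≤ q) {p : ℝ≥0∞} (hqp : ENNReal.ofReal q ≤ p) {r a : ℝ}
    (hr : r = 1 - q⁻¹ + p.toReal⁻¹) (har : d - 1 < a * r) {N : ℝ≥0}
    (hN : ∀ x ∈ Ω, ∫⁻ z in Ω, ‖z - x‖ₑ ^ (-a) ≤ N) {T : ℝ≥0∞}
    (hu : eLpNorm U.u (ENNReal.ofReal q) (volume.restrict Ω) ≤ T)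
    (hdu : ∀ i, eLpNorm (U.du i) (ENNReal.ofReal q) (volume.restrict Ω) ≤ T) :
    eLpNorm U.u p (volume.restrict Ω) ≤
      ENNReal.ofReal ((2 / volume.real Ω) ^ q⁻¹ * volume.real Ω ^ p.toReal⁻¹ +
        d * (Metric.diam Ω ^ (a * r + 1) * (2 / volume.real Ω) / (a * r + 1 - d) * N ^ r)) * T := by
  set c := Metric.diam Ω ^ (a * r + 1) * (2 / volume.real Ω) / (a * r + 1 - d)
  have hV : 0 < volume.real Ω := volume_real_pos_of_isOpen hΩo hΩb hne
  have hα : 0 < a * r + 1 - d := by linarith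
  have hc : 0 ≤ c := by positivity
  have hp1 : 1 ≤ p := le_trans (by simpa using hq) hqp
  obtain ⟨m, hm, hum⟩ := exists_ae_enorm_sub_le_rieszPotential hΩo hΩb hΩ hne har
    (U.integrableOn hΩb hq) (U.integrableOn_du hΩb hq) U.hw
  have hmean : eLpNorm (fun _ => m) p (volume.restrict Ω) ≤
      ENNReal.ofReal ((2 / volume.real Ω) ^ q⁻¹ * volume.real Ω ^ p.toReal⁻¹) * T := by
    rw [eLpNorm_const m (one_pos.trans_le hp1).ne'
        (by simpa using (hΩo.measure_pos volume hne).ne'), Measure.restrict_apply_univ, one_div,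
      ← ofReal_measureReal hΩb.measure_lt_top.ne, ENNReal.ofReal_rpow_of_pos hV,
      ENNReal.ofReal_mul (by positivity), mul_right_comm,
      ← ENNReal.ofReal_rpow_of_pos (div_pos two_pos hV)]
    gcongr
    exact (hm q hq).trans (by gcongr)
  calc eLpNorm U.u p (volume.restrict Ω)
      = eLpNorm ((fun _ => m) + fun x => U.u x - m) p (volume.restrict Ω) := by
        congr 1
        ext x
        simp
    _ ≤ eLpNorm (fun _ => m) p (volume.restrict Ω) +
        eLpNorm (fun x => U.u x - m) p (volume.restrict Ω) :=
        eLpNorm_add_le aestronglyMeasurable_const (U.hu.1.sub aestronglyMeasurable_const) hp1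
    _ ≤ _ := by
        rw [ENNReal.ofReal_add (by positivity) (by positivity), add_mul]
        exact add_le_add hmean (U.eLpNorm_sub_const_le_mul hΩo hq hqp hr hN hdu hc hum)

theorem memLp (hΩo : IsOpen Ω) (hΩb : Bornology.IsBounded Ω) (hΩ : Convex ℝ Ω) (hq : 1 ≤ q)
    {p : ℝ≥0∞} (hqp : ENNReal.ofReal q ≤ p) (hqpd : q⁻¹ - (d : ℝ)⁻¹ < p.toReal⁻¹) :
    MemLp U.u p (volume.restrict Ω) := by
  rcases Ω.eq_empty_or_nonempty with rfl | hne
  · simp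
  have hd : (1 : ℝ) ≤ d := by exact_mod_cast NeZero.one_le
  set r := 1 - q⁻¹ + p.toReal⁻¹ with hr
  have hrd : (d - 1) / d < r := by
    rw [sub_div, div_self (by positivity), one_div]
    linarith
  have hr0 : 0 < r := lt_of_le_of_lt (by bound) hrd
  obtain ⟨a, har, had⟩ : ∃ a, (d - 1) / r < a ∧ a < d :=
    exists_between ((div_lt_comm₀ (by positivity) hr0).1 hrd)
  obtain ⟨N, hN⟩ := exists_lintegral_enorm_sub_rpow_neg_le (E := Euc d) volume
    (a := a) (by simpa using had) (Metric.diam Ω)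
  refine ⟨U.hu.1, (U.eLpNorm_le_mul hΩo hΩb hΩ hne hq hqp hr ((div_lt_iff₀ hr0).1 har)
    (fun x hx => hN x Ω fun y hy => Metric.dist_le_diam_of_mem hΩb hy hx) le_self_add
    fun i => (Finset.single_le_sum (f := fun i => eLpNorm (U.du i) (ENNReal.ofReal q)
      (volume.restrict Ω)) (fun _ _ => zero_le) (Finset.mem_univ i)).trans
        le_add_self).trans_lt ?_⟩
  exact ENNReal.mul_lt_top ENNReal.ofReal_lt_top
    (ENNReal.add_lt_top.2 ⟨U.hu.2, ENNReal.sum_lt_top.2 fun i _ => (U.hdu i).2⟩)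

end W1Fun

end SobolevInequality

section SobolevFunctions

variable {d : ℕ} {Ω : Set (Euc d)}

theorem LpN_two (f : Euc d → ℂ) : LpN Ω 2 f = L2N Ω f := by
  rw [LpN, L2N, ENNReal.ofReal_ofNat]

theorem sum_rpow_le_rpow_of_sum_sq_le {ι : Type*} {s : Finset ι} {a : ι → ℝ}
    (ha : ∀ i ∈ s, 0 ≤ a i) {S : ℝ} (hS : 0 ≤ S) (h : ∑ i ∈ s, a i ^ 2 ≤ S ^ 2) {p : ℝ}
    (hp : 2 ≤ p) : ∑ i ∈ s, a i ^ p ≤ S ^ p := by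
  have hsplit (x : ℝ) (hx : 0 ≤ x) : x ^ p = x ^ 2 * x ^ (p - 2) := by
    rw [← Real.rpow_two, ← Real.rpow_add_of_nonneg hx zero_le_two (sub_nonneg.2 hp),
      add_sub_cancel]
  have haS (i) (hi : i ∈ s) : a i ≤ S :=
    le_of_sq_le_sq ((Finset.single_le_sum (f := fun i => a i ^ 2) (fun _ _ => sq_nonneg _) hi).trans
      h) hS
  calc ∑ i ∈ s, a i ^ p ≤ ∑ i ∈ s, a i ^ 2 * S ^ (p - 2) := by
        refine Finset.sum_le_sum fun i hi => ?_
        rw [hsplit _ (ha i hi)]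
        exact mul_le_mul_of_nonneg_left
          (Real.rpow_le_rpow (ha i hi) (haS i hi) (sub_nonneg.2 hp)) (sq_nonneg _)
    _ ≤ S ^ 2 * S ^ (p - 2) := by
        rw [← Finset.sum_mul]
        gcongr
    _ = S ^ p := (hsplit S hS).symm

theorem sum_sum_finCons {ι M : Type*} [Fintype ι] [AddCommMonoid M] {j : ℕ}
    (f : (Fin (j + 1) → ι) → M) : ∑ v : Fin j → ι, ∑ i, f (Fin.cons i v) = ∑ w, f w := by
  rw [← (Fin.consEquiv fun _ => ι).sum_comp, Fintype.sum_prod_type_right]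
  rfl

namespace W1Fun

theorem norm_nonneg {p : ℝ} (U : W1Fun d Ω p) : 0 ≤ U.norm := by
  have h (f : Euc d → ℂ) : 0 ≤ LpN Ω p f ^ p := Real.rpow_nonneg ENNReal.toReal_nonneg p
  exact Real.rpow_nonneg (add_nonneg (h _) (Finset.sum_nonneg fun i _ => h _)) _

theorem norm_rpow {p : ℝ} (hp : p ≠ 0) (U : W1Fun d Ω p) :
    U.norm ^ p = LpN Ω p U.u ^ p + ∑ i, LpN Ω p (U.du i) ^ p := by
  have h (f : Euc d → ℂ) : 0 ≤ LpN Ω p f ^ p := Real.rpow_nonneg ENNReal.toReal_nonneg p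
  rw [W1Fun.norm, one_div,
    Real.rpow_inv_rpow (add_nonneg (h _) (Finset.sum_nonneg fun i _ => h _)) hp]

theorem norm_sq (U : W1Fun d Ω 2) : U.norm ^ 2 = L2N Ω U.u ^ 2 + ∑ i, L2N Ω (U.du i) ^ 2 := by
  simpa only [LpN_two, Real.rpow_two] using U.norm_rpow two_ne_zero

end W1Fun

namespace SobFun

variable {k : ℕ} (U : SobFun d Ω k)

theorem sobNormInt_nonneg : 0 ≤ SobNormInt U := Real.sqrt_nonneg _

theorem sobNormInt_sq :
    SobNormInt U ^ 2 = ∑ j ∈ Finset.range (k + 1), ∑ v : Fin j → Fin d, L2N Ω (U.D j v) ^ 2 :=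
  Real.sq_sqrt (by positivity)

theorem L2N_D_le_sobNormInt {j : ℕ} (hj : j ≤ k) (v : Fin j → Fin d) :
    L2N Ω (U.D j v) ≤ SobNormInt U := by
  refine le_of_sq_le_sq ?_ U.sobNormInt_nonneg
  rw [U.sobNormInt_sq]
  exact (Finset.single_le_sum (f := fun v => L2N Ω (U.D j v) ^ 2) (fun _ _ => sq_nonneg _)
    (Finset.mem_univ v)).trans (Finset.single_le_sum
      (f := fun j => ∑ v : Fin j → Fin d, L2N Ω (U.D j v) ^ 2)
      (fun _ _ => by positivity) (Finset.mem_range_succ_iff.2 hj))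

theorem eLpNorm_D_le_sobNormInt {j : ℕ} (hj : j ≤ k) (v : Fin j → Fin d) :
    eLpNorm (U.D j v) 2 (volume.restrict Ω) ≤ ENNReal.ofReal (SobNormInt U) := by
  rw [← ENNReal.ofReal_toReal (U.mem j hj v).2.ne]
  exact ENNReal.ofReal_le_ofReal (U.L2N_D_le_sobNormInt hj v)

/-- A derivative of `U` of order `j < k`, with its own first-order derivatives, as an element of
`W^{1,p}(Ω)`, given that the derivatives of orders `j` and `j + 1` are `p`-integrable. -/
def toW1Fun {j : ℕ} (hj : j < k) (v : Fin j → Fin d) {p : ℝ}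
    (h : MemLp (U.D j v) (ENNReal.ofReal p) (volume.restrict Ω))
    (h' : ∀ i, MemLp (U.D (j + 1) (Fin.cons i v)) (ENNReal.ofReal p) (volume.restrict Ω)) :
    W1Fun d Ω p :=
  ⟨U.D j v, fun i => U.D (j + 1) (Fin.cons i v), h, h', U.weak j hj v⟩

/-- A derivative of `U` of order `j < k`, with its own first-order derivatives, as an element of
`W^{1,2}(Ω)`. -/
def toW1Fun2 {j : ℕ} (hj : j < k) (v : Fin j → Fin d) : W1Fun d Ω 2 :=
  U.toW1Fun hj v (by rw [ENNReal.ofReal_ofNat]; exact U.mem j hj.le v)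
    fun i => by rw [ENNReal.ofReal_ofNat]; exact U.mem (j + 1) hj (Fin.cons i v)

theorem sum_norm_toW1Fun2_sq_le {j : ℕ} (hj : j < k) :
    ∑ v, (U.toW1Fun2 hj v).norm ^ 2 ≤ SobNormInt U ^ 2 := by
  calc ∑ v, (U.toW1Fun2 hj v).norm ^ 2
      = ∑ v, L2N Ω (U.D j v) ^ 2 + ∑ w, L2N Ω (U.D (j + 1) w) ^ 2 := by
        rw [← sum_sum_finCons, ← Finset.sum_add_distrib]
        exact Finset.sum_congr rfl fun v _ => (U.toW1Fun2 hj v).norm_sq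
    _ = ∑ l ∈ {j, j + 1}, ∑ v : Fin l → Fin d, L2N Ω (U.D l v) ^ 2 :=
        (Finset.sum_pair (f := fun l => ∑ v : Fin l → Fin d, L2N Ω (U.D l v) ^ 2)
          j.lt_succ_self.ne).symm
    _ ≤ SobNormInt U ^ 2 := by
        rw [U.sobNormInt_sq]
        refine Finset.sum_le_sum_of_subset_of_nonneg (fun l hl => ?_) fun _ _ _ => by positivity
        simp only [Finset.mem_insert, Finset.mem_singleton] at hl
        exact Finset.mem_range.2 (by omega)

theorem sum_LpN_D_rpow_le {p C2p : ℝ} (hp : 2 ≤ p) (hC2p0 : 0 ≤ C2p)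
    (hC2p : ∀ W : W1Fun d Ω 2, LpN Ω p W.u ≤ C2p * W.norm) {j : ℕ} (hj : j < k) :
    ∑ v, LpN Ω p (U.D j v) ^ p ≤ (C2p * SobNormInt U) ^ p := by
  rw [Real.mul_rpow hC2p0 U.sobNormInt_nonneg]
  calc ∑ v, LpN Ω p (U.D j v) ^ p
      ≤ ∑ v, C2p ^ p * (U.toW1Fun2 hj v).norm ^ p := by
        refine Finset.sum_le_sum fun v _ => ?_
        rw [← Real.mul_rpow hC2p0 (W1Fun.norm_nonneg _)]
        exact Real.rpow_le_rpow ENNReal.toReal_nonneg (hC2p (U.toW1Fun2 hj v)) (by positivity)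
    _ ≤ C2p ^ p * SobNormInt U ^ p := by
        rw [← Finset.mul_sum]
        gcongr
        exact sum_rpow_le_rpow_of_sum_sq_le (fun v _ => W1Fun.norm_nonneg _) U.sobNormInt_nonneg
          (U.sum_norm_toW1Fun2_sq_le hj) hp

theorem norm_toW1Fun_le {p C2p : ℝ} (hp : 2 ≤ p) (hC2p0 : 0 ≤ C2p)
    (hC2p : ∀ W : W1Fun d Ω 2, LpN Ω p W.u ≤ C2p * W.norm) {j : ℕ} (hj : j + 1 < k)
    (v : Fin j → Fin d) (h : MemLp (U.D j v) (ENNReal.ofReal p) (volume.restrict Ω))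
    (h' : ∀ i, MemLp (U.D (j + 1) (Fin.cons i v)) (ENNReal.ofReal p) (volume.restrict Ω)) :
    (U.toW1Fun (Nat.lt_of_succ_lt hj) v h h').norm ≤ 2 ^ (1 / p) * C2p * SobNormInt U := by
  have hS := U.sobNormInt_nonneg
  have hp0 : 0 < p := by linarith
  have hnn {l : ℕ} (w : Fin l → Fin d) : 0 ≤ LpN Ω p (U.D l w) ^ p :=
    Real.rpow_nonneg ENNReal.toReal_nonneg p
  have hlow : LpN Ω p (U.D j v) ^ p ≤ (C2p * SobNormInt U) ^ p :=
    (Finset.single_le_sum (f := fun v => LpN Ω p (U.D j v) ^ p) (fun w _ => hnn w)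
      (Finset.mem_univ v)).trans (U.sum_LpN_D_rpow_le hp hC2p0 hC2p (Nat.lt_of_succ_lt hj))
  have hhigh : ∑ i, LpN Ω p (U.D (j + 1) (Fin.cons i v)) ^ p ≤ (C2p * SobNormInt U) ^ p := by
    refine le_trans ?_ (U.sum_LpN_D_rpow_le hp hC2p0 hC2p hj)
    rw [← sum_sum_finCons]
    exact Finset.single_le_sum (f := fun v => ∑ i, LpN Ω p (U.D (j + 1) (Fin.cons i v)) ^ p)
      (fun w _ => Finset.sum_nonneg fun i _ => hnn _) (Finset.mem_univ v)
  rw [← Real.rpow_le_rpow_iff (W1Fun.norm_nonneg _) (by positivity) hp0, W1Fun.norm_rpow hp0.ne',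
    mul_assoc, Real.mul_rpow (by positivity) (by positivity), one_div,
    Real.rpow_inv_rpow zero_le_two hp0.ne', two_mul]
  exact add_le_add hlow hhigh

theorem memLp_D [NeZero d] (hΩo : IsOpen Ω) (hΩb : Bornology.IsBounded Ω) (hΩ : Convex ℝ Ω)
    {p : ℝ} (hp : 2 ≤ p) (hpd : (2 : ℝ)⁻¹ - (d : ℝ)⁻¹ < p⁻¹) {j : ℕ} (hj : j < k)
    (v : Fin j → Fin d) : MemLp (U.D j v) (ENNReal.ofReal p) (volume.restrict Ω) :=
  (U.toW1Fun2 hj v).memLp hΩo hΩb hΩ one_le_two (ENNReal.ofReal_le_ofReal hp)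
    (by rwa [ENNReal.toReal_ofReal (by linarith)])

theorem linfN_u_le_of_embeddings [NeZero d] (hΩo : IsOpen Ω) (hΩb : Bornology.IsBounded Ω)
    (hΩ : Convex ℝ Ω) {p : ℝ} (hp : 2 ≤ p) (hpd : (2 : ℝ)⁻¹ - (d : ℝ)⁻¹ < p⁻¹) {C2p Cpinf : ℝ}
    (hC2p0 : 0 ≤ C2p) (hCpinf0 : 0 ≤ Cpinf)
    (hC2p : ∀ W : W1Fun d Ω 2, LpN Ω p W.u ≤ C2p * W.norm)
    (hCpinf : ∀ W : W1Fun d Ω p, LinfN Ω W.u ≤ Cpinf * W.norm) (U : SobFun d Ω 2) :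
    LinfN Ω U.u ≤ 2 ^ (1 / p) * C2p * Cpinf * SobNormInt U := by
  let W : W1Fun d Ω p := U.toW1Fun two_pos (fun i => i.elim0)
    (U.memLp_D hΩo hΩb hΩ hp hpd two_pos _) fun i => U.memLp_D hΩo hΩb hΩ hp hpd one_lt_two _
  calc LinfN Ω U.u ≤ Cpinf * W.norm := hCpinf W
    _ ≤ Cpinf * (2 ^ (1 / p) * C2p * SobNormInt U) := by
        gcongr
        exact U.norm_toW1Fun_le hp hC2p0 hC2p one_lt_two _ _ _
    _ = 2 ^ (1 / p) * C2p * Cpinf * SobNormInt U := by ring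

end SobFun

end SobolevFunctions

section LowerBound

variable {d : ℕ} {Ω : Set (Euc d)}

theorem isWeakDeriv_const (i : Fin d) (c : ℂ) : IsWeakDeriv Ω i (fun _ => c) 0 := by
  rintro φ ⟨hφ, hφc, hφΩ⟩
  have hpd : Integrable (pd i φ) :=
    ((hφ.continuous_fderiv (by simp)).clm_apply continuous_const).integrable_of_hasCompactSupport
      (hφc.fderiv_apply (𝕜 := ℝ) _)
  have hint := integral_mul_fderiv_eq_neg_fderiv_mul_of_integrable (μ := volume)
    (f := fun _ : Euc d => c) (g := φ) (v := EuclideanSpace.single i (1 : ℝ)) (by simp)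
    (hpd.const_mul c) ((hφ.continuous.integrable_of_hasCompactSupport hφc).const_mul c)
    (by simp) fun x _ => hφ.differentiable (by simp) x
  rw [setIntegral_eq_integral_of_forall_compl_eq_zero]
  · simpa [pd] using hint
  · intro x hx
    simp [pd, fderiv_of_notMem_tsupport (𝕜 := ℝ) fun h => hx (hφΩ h)]

/-- The constant function `1` on a set of finite measure, as an element of `H^k(Ω)`. -/
def SobFun.one (k : ℕ) (hΩ : volume Ω ≠ ⊤) : SobFun d Ω k where
  D j _ := if j = 0 then 1 else 0
  mem j _ _ := by
    have : IsFiniteMeasure (volume.restrict Ω) := ⟨by simpa using hΩ.lt_top⟩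
    split_ifs
    · exact memLp_const (1 : ℂ)
    · exact memLp_const (0 : ℂ)
  weak j _ _ i := by
    rw [if_neg j.succ_ne_zero]
    split_ifs
    · exact isWeakDeriv_const i 1
    · exact isWeakDeriv_const i 0

theorem L2N_one : L2N Ω 1 = √(volume.real Ω) := by
  rcases eq_or_ne (volume Ω) 0 with h | h
  · simp [L2N, Measure.real, Measure.restrict_eq_zero.2 h, h]
  · rw [L2N, Pi.one_def, eLpNorm_const _ two_ne_zero (by simpa using h), Real.sqrt_eq_rpow]
    simp [Measure.real, ENNReal.toReal_rpow]

theorem SobFun.sobNormInt_one (k : ℕ) (hΩ : volume Ω ≠ ⊤) :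
    SobNormInt (SobFun.one k hΩ) = √(volume.real Ω) := by
  rw [← L2N_one, SobNormInt, Finset.sum_range_succ']
  simp [SobFun.one, L2N]

theorem linfN_one (hΩ : volume Ω ≠ 0) : LinfN Ω 1 = 1 := by
  rw [LinfN, Pi.one_def, eLpNorm_const _ ENNReal.top_ne_zero (by simpa using hΩ)]
  simp

theorem one_div_sqrt_volume_le {k : ℕ} (hΩ0 : volume Ω ≠ 0) (hΩ : volume Ω ≠ ⊤) {C : ℝ}
    (hC : ∀ U : SobFun d Ω k, LinfN Ω U.u ≤ C * SobNormInt U) : 1 / √(volume.real Ω) ≤ C := by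
  have h : LinfN Ω 1 ≤ C * SobNormInt (SobFun.one k hΩ) := hC (SobFun.one k hΩ)
  rw [linfN_one hΩ0, SobFun.sobNormInt_one] at h
  exact (div_le_iff₀ (Real.sqrt_pos.2 (ENNReal.toReal_pos hΩ0 hΩ))).2 h

theorem CS2_mem_Icc (hΩ0 : volume Ω ≠ 0) (hΩ : volume Ω ≠ ⊤) {C : ℝ} (hC0 : 0 ≤ C)
    (hC : ∀ U : SobFun d Ω 2, LinfN Ω U.u ≤ C * SobNormInt U) :
    CS2 Ω ∈ Icc (1 / √(volume.real Ω)) C :=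
  ⟨le_csInf ⟨C, hC0, hC⟩ fun _ h => one_div_sqrt_volume_le hΩ0 hΩ h.2,
    csInf_le ⟨0, fun _ h => h.1⟩ ⟨hC0, hC⟩⟩

end LowerBound

section SmallDiameter

variable {d : ℕ} {Ω : Set (Euc d)}

/-- The oscillation constant of the two Sobolev steps `H¹ → L⁴` and `W^{1,4} → L^∞`, both obtained
from the Riesz potential of exponent `3a/4`, where `N` bounds `∫_Ω |z - x|^{-a} dz`. -/
def oscConst (Ω : Set (Euc d)) (a : ℝ) (N : ℝ≥0) : ℝ :=
  d * (Metric.diam Ω ^ (a * (3 / 4) + 1) * (2 / volume.real Ω) / (a * (3 / 4) + 1 - d) *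
    N ^ (3 / 4 : ℝ))

theorem oscConst_nonneg {a : ℝ} (ha : d - 1 < a * (3 / 4)) (N : ℝ≥0) : 0 ≤ oscConst Ω a N := by
  have : 0 < a * (3 / 4) + 1 - d := by linarith
  have := Metric.diam_nonneg (s := Ω)
  unfold oscConst
  positivity

theorem oscConst_mul_rpow_eq {a C : ℝ} (hC : 0 < C) (hdiam : 0 < Metric.diam Ω)
    (hvol : volume.real Ω = C * Metric.diam Ω ^ d) (N : ℝ≥0) :
    oscConst Ω a N * volume.real Ω ^ (4⁻¹ : ℝ) =
      d * (2 / C / (a * (3 / 4) + 1 - d) * N ^ (3 / 4 : ℝ)) * C ^ (4⁻¹ : ℝ) *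
        Metric.diam Ω ^ (a * (3 / 4) + 1 - d * (3 / 4)) := by
  rw [oscConst, hvol]
  set D := Metric.diam Ω
  have hpow : D ^ (a * (3 / 4) + 1) / D ^ d * D ^ (d * 4⁻¹ : ℝ) =
      D ^ (a * (3 / 4) + 1 - d * (3 / 4)) := by
    rw [← Real.rpow_natCast, ← Real.rpow_sub hdiam, ← Real.rpow_add hdiam]
    ring_nf
  rw [Real.mul_rpow hC.le (by positivity), ← Real.rpow_natCast_mul hdiam.le, ← hpow]
  field_simp

variable [NeZero d]

namespace SobFun

theorem eLpNorm_D_four_le (hΩo : IsOpen Ω) (hΩb : Bornology.IsBounded Ω) (hΩ : Convex ℝ Ω)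
    (hne : Ω.Nonempty) {a : ℝ} (ha : d - 1 < a * (3 / 4)) {N : ℝ≥0}
    (hN : ∀ x ∈ Ω, ∫⁻ z in Ω, ‖z - x‖ₑ ^ (-a) ≤ N) {k : ℕ} (U : SobFun d Ω k) {j : ℕ} (hj : j < k)
    (v : Fin j → Fin d) :
    eLpNorm (U.D j v) (ENNReal.ofReal 4) (volume.restrict Ω) ≤
      ENNReal.ofReal ((2 / volume.real Ω) ^ (2⁻¹ : ℝ) * volume.real Ω ^ (4⁻¹ : ℝ) +
        oscConst Ω a N) * ENNReal.ofReal (SobNormInt U) := by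
  have h4 : (ENNReal.ofReal 4).toReal⁻¹ = 4⁻¹ := by simp
  have h := (U.toW1Fun2 hj v).eLpNorm_le_mul hΩo hΩb hΩ hne one_le_two (p := ENNReal.ofReal 4)
    (ENNReal.ofReal_le_ofReal (by norm_num)) (r := 3 / 4) (by rw [h4]; norm_num) ha hN
    (T := ENNReal.ofReal (SobNormInt U))
    (by rw [ENNReal.ofReal_ofNat]; exact U.eLpNorm_D_le_sobNormInt hj.le v)
    fun i => by rw [ENNReal.ofReal_ofNat]; exact U.eLpNorm_D_le_sobNormInt hj (Fin.cons i v)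
  rwa [h4] at h

theorem linfN_u_le_mul_mul (hd : d ≤ 3) (hΩo : IsOpen Ω) (hΩb : Bornology.IsBounded Ω)
    (hΩ : Convex ℝ Ω) (hne : Ω.Nonempty) {a : ℝ} (ha : d - 1 < a * (3 / 4)) {N : ℝ≥0}
    (hN : ∀ x ∈ Ω, ∫⁻ z in Ω, ‖z - x‖ₑ ^ (-a) ≤ N) (U : SobFun d Ω 2) :
    LinfN Ω U.u ≤ ((2 / volume.real Ω) ^ (4⁻¹ : ℝ) + oscConst Ω a N) *
      (((2 / volume.real Ω) ^ (2⁻¹ : ℝ) * volume.real Ω ^ (4⁻¹ : ℝ) + oscConst Ω a N) *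
        SobNormInt U) := by
  have hosc := oscConst_nonneg (Ω := Ω) ha N
  have hS := U.sobNormInt_nonneg
  have hd4 : (2 : ℝ)⁻¹ - (d : ℝ)⁻¹ < 4⁻¹ := by
    have : (3 : ℝ)⁻¹ ≤ (d : ℝ)⁻¹ :=
      inv_anti₀ (by exact_mod_cast NeZero.pos d) (by exact_mod_cast hd)
    linarith
  let W : W1Fun d Ω 4 := U.toW1Fun two_pos (fun i => i.elim0)
    (U.memLp_D hΩo hΩb hΩ (by norm_num) hd4 two_pos _)
    fun i => U.memLp_D hΩo hΩb hΩ (by norm_num) hd4 one_lt_two _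
  have h := W.eLpNorm_le_mul hΩo hΩb hΩ hne (by norm_num) (p := ⊤) le_top (r := 3 / 4)
    (by norm_num) ha hN (U.eLpNorm_D_four_le hΩo hΩb hΩ hne ha hN two_pos _)
    fun i => U.eLpNorm_D_four_le hΩo hΩb hΩ hne ha hN one_lt_two _
  rw [ENNReal.toReal_top, inv_zero, Real.rpow_zero, mul_one, ← ENNReal.ofReal_mul (by positivity),
    ← ENNReal.ofReal_mul (by positivity)] at h
  exact ENNReal.toReal_le_of_le_ofReal (by positivity) h

theorem linfN_u_le_of_oscConst_le (hd : d ≤ 3) (hΩo : IsOpen Ω) (hΩb : Bornology.IsBounded Ω)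
    (hΩ : Convex ℝ Ω) (hne : Ω.Nonempty) {a : ℝ} (ha : d - 1 < a * (3 / 4)) {N : ℝ≥0}
    (hN : ∀ x ∈ Ω, ∫⁻ z in Ω, ‖z - x‖ₑ ^ (-a) ≤ N)
    (hosc : oscConst Ω a N * volume.real Ω ^ (4⁻¹ : ℝ) ≤ 1 / 4) (U : SobFun d Ω 2) :
    LinfN Ω U.u ≤ 2 ^ (3 / 2 : ℝ) / √(volume.real Ω) * SobNormInt U := by
  refine (U.linfN_u_le_mul_mul hd hΩo hΩb hΩ hne ha hN).trans ?_
  rw [← mul_assoc]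
  refine mul_le_mul_of_nonneg_right ?_ U.sobNormInt_nonneg
  have hV : 0 < volume.real Ω := volume_real_pos_of_isOpen hΩo hΩb hne
  have hκ := oscConst_nonneg (Ω := Ω) ha N
  set V := volume.real Ω
  set κ := oscConst Ω a N
  set w := V ^ (4⁻¹ : ℝ) with hw
  set s := (2 : ℝ) ^ (4⁻¹ : ℝ) with hs
  have hw0 : 0 < w := Real.rpow_pos_of_pos hV _
  have hsqrt (x : ℝ) (hx : 0 ≤ x) : x ^ (2⁻¹ : ℝ) = (x ^ (4⁻¹ : ℝ)) ^ 2 := by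
    rw [← Real.rpow_mul_natCast hx]
    norm_num
  have h2 : (2 : ℝ) ^ (3 / 2 : ℝ) = 2 * s ^ 2 := by
    rw [← hsqrt 2 zero_le_two, show (3 / 2 : ℝ) = 1 + 2⁻¹ by norm_num,
      Real.rpow_add two_pos, Real.rpow_one]
  rw [hsqrt _ (by positivity), Real.div_rpow zero_le_two hV.le, ← hw, ← hs, h2,
    Real.sqrt_eq_rpow, one_div, hsqrt V hV.le, ← hw, le_div_iff₀ (by positivity)]
  have hs1 : 1 ≤ s := Real.one_le_rpow one_le_two (by norm_num)
  have hs4 : s ^ 4 = 2 := by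
    rw [hs, ← Real.rpow_mul_natCast zero_le_two]
    norm_num
  calc (s / w + κ) * ((s / w) ^ 2 * w + κ) * w ^ 2 = (s + κ * w) * (s ^ 2 + κ * w) := by
        field_simp
    _ ≤ (s + 1 / 4) * (s ^ 2 + 1 / 4) := by gcongr
    _ ≤ 2 * s ^ 2 := by nlinarith

end SobFun

theorem exists_forall_diam_le_linfN_u_le (hd : d ≤ 3) {C : ℝ} (hC : 0 < C) :
    ∃ d₀ : ℝ, 0 < d₀ ∧ ∀ Ω : Set (Euc d), IsOpen Ω → Bornology.IsBounded Ω → Convex ℝ Ω →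
      Ω.Nonempty → volume.real Ω = C * Metric.diam Ω ^ d → Metric.diam Ω ≤ d₀ →
        ∀ U : SobFun d Ω 2, LinfN Ω U.u ≤ 2 ^ (3 / 2 : ℝ) / √(volume.real Ω) * SobNormInt U := by
  have hd1 : (1 : ℝ) ≤ d := by exact_mod_cast NeZero.one_le
  have hd3 : (d : ℝ) ≤ 3 := by exact_mod_cast hd
  obtain ⟨a, ha, had⟩ : ∃ a, (d - 1) * (4 / 3 : ℝ) < a ∧ a < d := exists_between (by linarith)
  obtain ⟨N, hN⟩ := exists_lintegral_enorm_sub_rpow_neg_le (E := Euc d) volume (a := a)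
    (by simpa using had) 1
  set M := d * (2 / C / (a * (3 / 4) + 1 - d) * N ^ (3 / 4 : ℝ)) * C ^ (4⁻¹ : ℝ)
  have hlim : Tendsto (fun D : ℝ => M * D ^ (a * (3 / 4) + 1 - d * (3 / 4))) (𝓝 0) (𝓝 0) := by
    have hpos : 0 < a * (3 / 4) + 1 - d * (3 / 4) := by linarith
    simpa [Real.zero_rpow hpos.ne'] using
      ((Real.continuousAt_rpow_const 0 _ (.inr hpos.le)).tendsto.const_mul M)
  obtain ⟨δ, hδ, hball⟩ := Metric.eventually_nhds_iff.1 (hlim.eventually_le_const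
    (show (0 : ℝ) < 1 / 4 by norm_num))
  refine ⟨min 1 (δ / 2), by positivity, fun Ω hΩo hΩb hΩ hne hvol hdiam => ?_⟩
  have hD := diam_pos_of_isOpen hΩo hΩb hne
  refine SobFun.linfN_u_le_of_oscConst_le hd hΩo hΩb hΩ hne (by linarith)
    (fun x hx => hN x Ω fun y hy =>
      (Metric.dist_le_diam_of_mem hΩb hy hx).trans (hdiam.trans (min_le_left _ _))) ?_
  rw [oscConst_mul_rpow_eq hC hD hvol]
  refine hball ?_
  rw [Real.dist_0_eq_abs, abs_of_pos hD]
  linarith [hdiam.trans (min_le_right _ _)]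

end SmallDiameter

theorem npbe_CS2_bounds_general {d : ℕ} [NeZero d] (hd : d ≤ 3) {Ω : Set (Euc d)}
    (hΩo : IsOpen Ω) (hΩb : Bornology.IsBounded Ω) (hΩc : Convex ℝ Ω) (hne : Ω.Nonempty)
    {p : ℝ} (hp : 2 ≤ p) (hpd : (2 : ℝ)⁻¹ - (d : ℝ)⁻¹ < p⁻¹)
    {C2p Cpinf : ℝ} (hC2p0 : 0 ≤ C2p) (hCpinf0 : 0 ≤ Cpinf)
    (hC2p : ∀ U : W1Fun d Ω 2, LpN Ω p U.u ≤ C2p * W1Fun.norm U)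
    (hCpinf : ∀ U : W1Fun d Ω p, LinfN Ω U.u ≤ Cpinf * W1Fun.norm U) :
    (1 / √((volume Ω).toReal) ≤ CS2 Ω ∧ CS2 Ω ≤ (2 : ℝ) ^ (1 / p) * C2p * Cpinf) ∧
    (∀ C : ℝ, 0 < C → ∃ d₀ : ℝ, 0 < d₀ ∧
      ∀ Ω' : Set (Euc d), IsOpen Ω' → Bornology.IsBounded Ω' → Convex ℝ Ω' →
        Ω'.Nonempty → (volume Ω').toReal = C * Metric.diam Ω' ^ d → Metric.diam Ω' ≤ d₀ →
          1 / √((volume Ω').toReal) ≤ CS2 Ω' ∧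
          CS2 Ω' ≤ (2 : ℝ) ^ ((3 : ℝ) / 2) / √((volume Ω').toReal)) := by
  refine ⟨CS2_mem_Icc (hΩo.measure_pos volume hne).ne' hΩb.measure_lt_top.ne (by positivity)
    (SobFun.linfN_u_le_of_embeddings hΩo hΩb hΩc hp hpd hC2p0 hCpinf0 hC2p hCpinf),
    fun C hC => ?_⟩
  obtain ⟨d₀, hd₀, h⟩ := exists_forall_diam_le_linfN_u_le hd hC
  exact ⟨d₀, hd₀, fun Ω' hΩo hΩb hΩc hne hvol hdiam =>
    CS2_mem_Icc (hΩo.measure_pos volume hne).ne' hΩb.measure_lt_top.ne (by positivity)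
      (h Ω' hΩo hΩb hΩc hne hvol hdiam)⟩

/-- Lemma `sobolevestimate`: for Ω ⊂ ℝ³ bounded and convex and
p ∈ (3,6),
  |Ω|^{-1/2} ≤ C_S(2) ≤ 2^{1/p} C_{2,p} C_{p,∞},
where C_{p,q} are any W^{1,p} → L^q embedding constants; and if |Ω| = C d_Ω³ then for
all sufficiently small diameters,  |Ω|^{-1/2} ≤ C_S(2) ≤ 2^{3/2} |Ω|^{-1/2}. -/
theorem npbe_CS2_bounds
    (Ω : Set (Euc 3)) (hΩo : IsOpen Ω) (hΩb : Bornology.IsBounded Ω)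
    (hΩc : Convex ℝ Ω) (hne : Ω.Nonempty)
    (p : ℝ) (hp3 : 3 < p) (hp6 : p < 6)
    (C2p Cpinf : ℝ) (hC2p0 : 0 ≤ C2p) (hCpinf0 : 0 ≤ Cpinf)
    (hC2p : ∀ U : W1Fun 3 Ω 2, LpN Ω p U.u ≤ C2p * W1Fun.norm U)
    (hCpinf : ∀ U : W1Fun 3 Ω p, LinfN Ω U.u ≤ Cpinf * W1Fun.norm U) :
    (1 / Real.sqrt ((volume Ω).toReal) ≤ CS2 Ω ∧
      CS2 Ω ≤ (2 : ℝ) ^ (1/p) * C2p * Cpinf) ∧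
    (∀ C : ℝ, 0 < C → ∃ d₀ : ℝ, 0 < d₀ ∧
      ∀ Ω' : Set (Euc 3), IsOpen Ω' → Bornology.IsBounded Ω' → Convex ℝ Ω' →
        Ω'.Nonempty → (volume Ω').toReal = C * (Metric.diam Ω')^3 →
        Metric.diam Ω' ≤ d₀ →
          1 / Real.sqrt ((volume Ω').toReal) ≤ CS2 Ω' ∧
          CS2 Ω' ≤ (2 : ℝ) ^ ((3:ℝ)/2) / Real.sqrt ((volume Ω').toReal)) :=
  npbe_CS2_bounds_general le_rfl hΩo hΩb hΩc hne (by linarith)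
    (by linarith [inv_strictAnti₀ (by linarith) hp6]) hC2p0 hCpinf0 hC2p hCpinf
end
end
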